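/- Converse for the classical-quantum multiple-access channel (multiple-access phase): Let W : Y₁ × Y₂ → S(H) be a classical-quantum multiple-access channel with finite input alphabets Y₁, Y₂. If the pair of nonnegative reals (R₁, R₂) is achievable with average error — i.e., for every ε > 0 and δ > 0 and all sufficiently large n there exists an (n, J₁, J₂) MAC code with (1/n)·log₂ J₁ ≥ R₁ − δ, (1/n)·log₂ J₂ ≥ R₂ − δ, and average error at most ε — then (R₁, R₂) lies in the closure of the convex hull of the union, over all pairs of probability distributions Q₁ on Y₁ and Q₂ on Y₂, of the sets {(R₁, R₂) : R₁ ≤ I₁, R₂ ≤ I₂, R₁ + R₂ ≤ I₁₂}, where I₁ := Σ_{y₂} Q₂(y₂) χ(Q₁; W(·, y₂)), I₂ := Σ_{y₁} Q₁(y₁) χ(Q₂; W(y₁, ·)), and I₁₂ := χ(Q₁×Q₂; W). -/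

import Mathlib

open scoped BigOperators ComplexOrder

noncomputable section

/-- The Loewner order on operators: `A ≤ B` iff `B - A` is positive semidefinite. -/
def loewnerLE {ι : Type*} [Fintype ι] (A B : Matrix ι ι ℂ) : Prop := (B - A).PosSemidef

/-- A quantum state: a positive semidefinite operator with unit trace. -/
def IsState {ι : Type*} [Fintype ι] (ρ : Matrix ι ι ℂ) : Prop := ρ.PosSemidef ∧ ρ.trace = 1

/-- The von Neumann entropy `S(ρ) = −tr(ρ log₂ ρ)`, computed via eigenvalues. -/
noncomputable def vnEntropy {ι : Type*} [Fintype ι] [DecidableEq ι] (ρ : Matrix ι ι ℂ) : ℝ :=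
  if h : ρ.IsHermitian then -∑ i, h.eigenvalues i * Real.logb 2 (h.eigenvalues i) else 0

/-- The trace norm `‖A‖₁ = tr √(AᴴA)` (sum of singular values). -/
noncomputable def traceNorm {ι : Type*} [Fintype ι] [DecidableEq ι] (A : Matrix ι ι ℂ) : ℝ :=
  ∑ i, Real.sqrt ((Matrix.posSemidef_conjTranspose_mul_self A).1.eigenvalues i)

/-- A probability distribution on a finite set. -/
def IsDist {A : Type*} [Fintype A] (P : A → ℝ) : Prop := (∀ a, 0 ≤ P a) ∧ ∑ a, P a = 1

/-- The Holevo quantity `χ(P;W) = S(PW) − Σ_a P(a) S(W(a))`. -/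
noncomputable def holevo {A ι : Type*} [Fintype A] [Fintype ι] [DecidableEq ι]
    (P : A → ℝ) (W : A → Matrix ι ι ℂ) : ℝ :=
  vnEntropy (∑ a, (P a : ℂ) • W a) - ∑ a, P a * vnEntropy (W a)

/-- Tensor product `M 0 ⊗ ⋯ ⊗ M (n−1)` of matrices, realized on the index set `Fin n → ι`. -/
def tensorPow {n : ℕ} {ι : Type*} [Fintype ι] (M : Fin n → Matrix ι ι ℂ) :
    Matrix (Fin n → ι) (Fin n → ι) ℂ :=
  Matrix.of fun i j => ∏ k, M k (i k) (j k)

/-- The `n`-fold extension `W^{⊗n}(xⁿ) = W(x₁) ⊗ ⋯ ⊗ W(xₙ)` of a cq channel. -/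
def cqPow {A ι : Type*} [Fintype ι] (W : A → Matrix ι ι ℂ) (n : ℕ) (x : Fin n → A) :
    Matrix (Fin n → ι) (Fin n → ι) ℂ :=
  tensorPow fun k => W (x k)

/-- A POVM: positive semidefinite operators summing to at most the identity. -/
def IsPOVM {ι J : Type*} [Fintype ι] [DecidableEq ι] [Fintype J] (D : J → Matrix ι ι ℂ) : Prop :=
  (∀ j, (D j).PosSemidef) ∧ loewnerLE (∑ j, D j) 1

/-- Existence of an `(n, J₁, J₂)` bidirectional broadcast code for the cq channels `W₁`, `W₂`
with average errors `e₁ ≤ ε₁` and `e₂ ≤ ε₂`. -/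
def BroadcastCodeExists {A ι₁ ι₂ : Type*} [Fintype A] [Fintype ι₁] [DecidableEq ι₁]
    [Fintype ι₂] [DecidableEq ι₂]
    (W1 : A → Matrix ι₁ ι₁ ℂ) (W2 : A → Matrix ι₂ ι₂ ℂ)
    (n J1 J2 : ℕ) (ε₁ ε₂ : ℝ) : Prop :=
  ∃ (w : Fin J1 × Fin J2 → Fin n → A)
    (D1 : Fin J2 → Fin J1 → Matrix (Fin n → ι₁) (Fin n → ι₁) ℂ)
    (D2 : Fin J1 → Fin J2 → Matrix (Fin n → ι₂) (Fin n → ι₂) ℂ),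
    (∀ m2, IsPOVM (D1 m2)) ∧ (∀ m1, IsPOVM (D2 m1)) ∧
    (∀ m2, ((J1 : ℝ))⁻¹ * ∑ m1, ((1 - D1 m2 m1) * cqPow W1 n (w (m1, m2))).trace.re ≤ ε₁) ∧
    (∀ m1, ((J2 : ℝ))⁻¹ * ∑ m2, ((1 - D2 m1 m2) * cqPow W2 n (w (m1, m2))).trace.re ≤ ε₂)


/-- Existence of an `(n, J₁, J₂)` code for the cq multiple-access channel `W`
with average error at most `ε`. -/
def MACCodeExists {Y1 Y2 ι : Type*} [Fintype ι] [DecidableEq ι]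
    (W : Y1 → Y2 → Matrix ι ι ℂ) (n J1 J2 : ℕ) (ε : ℝ) : Prop :=
  ∃ (u : Fin J1 → Fin n → Y1) (v : Fin J2 → Fin n → Y2)
    (D : Fin J1 × Fin J2 → Matrix (Fin n → ι) (Fin n → ι) ℂ),
    IsPOVM D ∧
    (1 / ((J1 : ℝ) * (J2 : ℝ))) * ∑ m : Fin J1 × Fin J2,
      ((1 - D m) * tensorPow (fun k => W (u m.1 k) (v m.2 k))).trace.re ≤ ε

end

/-!
The relative entropy of two positive definite operators is an integral over `t > 0` of divergences,
each of which is a maximum of forms linear in the pair of operators (Kosaki's variational formula).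
This makes it jointly convex, which yields `I₁₂ ≤ I₁ + I₂`, and bounds it from below by the relative
entropy of the probabilities of a single measurement outcome. Applied to the message states and
their average, the lower bound is a Fano-type estimate: the success probability of a decoder times
the logarithm of the number of messages is at most the Holevo quantity plus a constant.

Subadditivity of the entropy bounds the Holevo quantity of a code by the sum over its letters, so a
code of length `n` satisfies the three inequalities of the region with `I₁`, `I₂`, `I₁₂` replaced by
sums over the letters. Since `I₁₂ ≤ I₁ + I₂` for every letter, a pair satisfying the summed
inequalities is a sum of points of the individual pentagons, hence `n` times a point of the convex
hull. The losses vanish as `n → ∞` and `ε → 0`, which leads to the closure.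
-/

/-! ### Spectral decompositions -/

section Diagonalization

open Matrix

variable {ι : Type*} [Fintype ι] [DecidableEq ι]

/-- `ρ = U diag(p) U*`: the columns of the unitary `U` are eigenvectors of `ρ` and the `p i` are the
corresponding eigenvalues, in no particular order. -/
def IsDiagonalizedBy (ρ : Matrix ι ι ℂ) (U : unitaryGroup ι ℂ) (p : ι → ℝ) : Prop :=
  ρ = U * diagonal (fun i => (p i : ℂ)) * star (U : Matrix ι ι ℂ)

theorem isDiagonalizedBy_cfc {ρ : Matrix ι ι ℂ} (hρ : ρ.IsHermitian) (f : ℝ → ℝ) :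
    IsDiagonalizedBy (cfc f ρ) hρ.eigenvectorUnitary (f ∘ hρ.eigenvalues) := by
  rw [hρ.cfc_eq, Matrix.IsHermitian.cfc, Unitary.conjStarAlgAut_apply]
  rfl

theorem isDiagonalizedBy_eigenvalues {ρ : Matrix ι ι ℂ} (hρ : ρ.IsHermitian) :
    IsDiagonalizedBy ρ hρ.eigenvectorUnitary hρ.eigenvalues := by
  simpa only [cfc_id ℝ ρ hρ.isSelfAdjoint, Function.id_comp] using isDiagonalizedBy_cfc hρ id

namespace IsDiagonalizedBy

variable {ρ : Matrix ι ι ℂ} {U : unitaryGroup ι ℂ} {p : ι → ℝ}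

theorem isHermitian (h : IsDiagonalizedBy ρ U p) : ρ.IsHermitian := by
  rw [h, star_eq_conjTranspose]
  exact isHermitian_mul_mul_conjTranspose _ (isHermitian_diagonal_of_self_adjoint _
    (funext fun i => Complex.conj_ofReal (p i)))

theorem star_mul_mul (h : IsDiagonalizedBy ρ U p) :
    star (U : Matrix ι ι ℂ) * ρ * U = diagonal (fun i => (p i : ℂ)) := by
  rw [h, mul_assoc, mul_assoc, UnitaryGroup.star_mul_self, mul_one, ← mul_assoc,
    UnitaryGroup.star_mul_self, one_mul]

theorem trace_mul (h : IsDiagonalizedBy ρ U p) (A : Matrix ι ι ℂ) :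
    (ρ * A).trace = ∑ i, (p i : ℂ) * (star (U : Matrix ι ι ℂ) * A * U) i i := by
  rw [h, mul_assoc, mul_assoc, trace_mul_comm, mul_assoc, trace]
  simp only [diag_apply, diagonal_mul]

theorem re_trace_mul (h : IsDiagonalizedBy ρ U p) (A : Matrix ι ι ℂ) :
    (ρ * A).trace.re = ∑ i, p i * ((star (U : Matrix ι ι ℂ) * A * U) i i).re := by
  simp only [h.trace_mul, Complex.re_sum, Complex.re_ofReal_mul]

theorem trace_eq (h : IsDiagonalizedBy ρ U p) : ρ.trace = ((∑ i, p i : ℝ) : ℂ) := by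
  simpa using h.trace_mul 1

theorem nonneg (h : IsDiagonalizedBy ρ U p) (hρ : ρ.PosSemidef) (i : ι) : 0 ≤ p i := by
  have hdiag := (hρ.conjTranspose_mul_mul_same (U : Matrix ι ι ℂ)).diag_nonneg (i := i)
  simpa [← star_eq_conjTranspose, h.star_mul_mul] using hdiag

theorem pos (h : IsDiagonalizedBy ρ U p) (hρ : ρ.PosDef) (i : ι) : 0 < p i := by
  have hinj : Function.Injective (U : Matrix ι ι ℂ).mulVec :=
    mulVec_injective_of_isUnit (Unitary.isUnit_coe (U := U))
  have hdiag := (hρ.conjTranspose_mul_mul_same hinj).diag_pos (i := i)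
  simpa [← star_eq_conjTranspose, h.star_mul_mul] using hdiag

theorem add_smul_one (h : IsDiagonalizedBy ρ U p) (s : ℝ) :
    IsDiagonalizedBy (ρ + (s : ℂ) • 1) U (fun i => p i + s) := by
  have hdiag : diagonal (fun i => ((p i + s : ℝ) : ℂ)) =
      diagonal (fun i => (p i : ℂ)) + (s : ℂ) • (1 : Matrix ι ι ℂ) := by
    rw [smul_one_eq_diagonal, diagonal_add]
    simp only [Complex.ofReal_add]
  rw [IsDiagonalizedBy, hdiag, mul_add, add_mul, ← h, mul_smul_comm, mul_one, smul_mul_assoc,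
    Unitary.mul_star_self_of_mem U.2]

theorem map_eigenvalues (h : IsDiagonalizedBy ρ U p) :
    Finset.univ.val.map h.isHermitian.eigenvalues = Finset.univ.val.map p := by
  have hcharpoly : ρ.charpoly = ∏ i, (Polynomial.X - Polynomial.C (p i : ℂ)) := by
    rw [← charpoly_diagonal, h, mul_assoc, charpoly_mul_comm, mul_assoc,
      UnitaryGroup.star_mul_self, mul_one]
  have hroots := h.isHermitian.roots_charpoly_eq_eigenvalues
  rw [hcharpoly, Polynomial.roots_prod _ _
    (Finset.prod_ne_zero_iff.2 fun i _ => Polynomial.X_sub_C_ne_zero _)] at hroots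
  simp only [Polynomial.roots_X_sub_C, Multiset.bind_singleton] at hroots
  simpa [Multiset.map_map, Function.comp_def] using congrArg (Multiset.map Complex.re) hroots.symm

theorem vnEntropy_mul_log_two (h : IsDiagonalizedBy ρ U p) :
    vnEntropy ρ * Real.log 2 = ∑ i, Real.negMulLog (p i) := by
  have hperm : ∑ i, Real.negMulLog (h.isHermitian.eigenvalues i) = ∑ i, Real.negMulLog (p i) := by
    have hsum := congrArg (fun s => (s.map Real.negMulLog).sum) h.map_eigenvalues
    simpa [Multiset.map_map, Function.comp_def] using hsum
  have hlog : Real.log 2 ≠ 0 := (Real.log_pos one_lt_two).ne'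
  rw [← hperm, vnEntropy, dif_pos h.isHermitian, neg_mul, Finset.sum_mul, ← Finset.sum_neg_distrib]
  refine Finset.sum_congr rfl fun i _ => ?_
  rw [Real.negMulLog, Real.logb]
  field_simp

end IsDiagonalizedBy

theorem vnEntropy_mul_log_two_eq_neg_trace {ρ : Matrix ι ι ℂ} (hρ : ρ.IsHermitian) :
    vnEntropy ρ * Real.log 2 = -(ρ * cfc Real.log ρ).trace.re := by
  rw [(isDiagonalizedBy_eigenvalues hρ).vnEntropy_mul_log_two,
    (isDiagonalizedBy_eigenvalues hρ).re_trace_mul, (isDiagonalizedBy_cfc hρ _).star_mul_mul,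
    ← Finset.sum_neg_distrib]
  simp [Real.negMulLog]

end Diagonalization

section TraceMul

open Matrix

variable {ι : Type*} [Fintype ι]

theorem re_trace_mul_nonneg {ρ T : Matrix ι ι ℂ} (hρ : ρ.PosSemidef) (hT : T.PosSemidef) :
    0 ≤ (ρ * T).trace.re := by
  classical
  have hdiag := isDiagonalizedBy_eigenvalues hρ.1
  rw [hdiag.re_trace_mul]
  exact Finset.sum_nonneg fun i _ => mul_nonneg (hdiag.nonneg hρ i)
    (Complex.le_def.1 (hT.conjTranspose_mul_mul_same _).diag_nonneg).1

theorem re_trace_mul_pos {ρ T : Matrix ι ι ℂ} (hρ : ρ.PosDef) (hT : T.PosSemidef) (hT0 : T ≠ 0) :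
    0 < (ρ * T).trace.re := by
  classical
  have hdiag := isDiagonalizedBy_eigenvalues hρ.1
  set U := hρ.1.eigenvectorUnitary
  have hconj : (star (U : Matrix ι ι ℂ) * T * U).PosSemidef := hT.conjTranspose_mul_mul_same _
  have htrace : (star (U : Matrix ι ι ℂ) * T * U).trace ≠ 0 := by
    rwa [trace_mul_comm, ← mul_assoc, Unitary.mul_star_self_of_mem U.2, one_mul, Ne,
      hT.trace_eq_zero_iff]
  obtain ⟨i, -, hi⟩ := Finset.exists_ne_zero_of_sum_ne_zero htrace
  have hre : ∀ i, 0 ≤ ((star (U : Matrix ι ι ℂ) * T * U) i i).re := fun i =>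
    (Complex.le_def.1 hconj.diag_nonneg).1
  rw [hdiag.re_trace_mul]
  refine Finset.sum_pos' (fun i _ => mul_nonneg (hdiag.pos hρ i).le (hre i))
    ⟨i, Finset.mem_univ i, mul_pos (hdiag.pos hρ i) ?_⟩
  exact (Complex.lt_def.1 (lt_of_le_of_ne hconj.diag_nonneg hi.symm)).1

end TraceMul

section Overlap

open Matrix

variable {ι : Type*} [Fintype ι] [DecidableEq ι]

/-- The transition probabilities `|⟨uᵢ, vⱼ⟩|²` between the orthonormal bases formed by the columns
of `U` and `V`. -/
def overlap (U V : unitaryGroup ι ℂ) : Matrix ι ι ℝ :=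
  (star (U : Matrix ι ι ℂ) * V).map Complex.normSq

theorem overlap_mem_doublyStochastic (U V : unitaryGroup ι ℂ) :
    overlap U V ∈ doublyStochastic ℝ ι := by
  set Z : unitaryGroup ι ℂ := star U * V
  rw [mem_doublyStochastic_iff_sum]
  refine ⟨fun i j => Complex.normSq_nonneg _, fun i => ?_, fun j => ?_⟩
  · have hrow := congrFun₂ (mem_unitaryGroup_iff.1 Z.2) i i
    simp only [mul_apply, star_apply, one_apply_eq, ← starRingEnd_apply, Complex.mul_conj] at hrow
    exact_mod_cast hrow
  · have hcol := congrFun₂ (UnitaryGroup.star_mul_self Z) j j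
    simp only [mul_apply, star_apply, one_apply_eq, ← starRingEnd_apply, mul_comm _ (Z.1 _ _),
      Complex.mul_conj] at hcol
    exact_mod_cast hcol

theorem sum_overlap_mul_left (U V : unitaryGroup ι ℂ) (f : ι → ℝ) :
    ∑ i, ∑ j, overlap U V i j * f i = ∑ i, f i := by
  simp only [← Finset.sum_mul, sum_row_of_mem_doublyStochastic (overlap_mem_doublyStochastic U V),
    one_mul]

theorem sum_overlap_mul_right (U V : unitaryGroup ι ℂ) (f : ι → ℝ) :
    ∑ i, ∑ j, overlap U V i j * f j = ∑ j, f j := by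
  rw [Finset.sum_comm]
  simp only [← Finset.sum_mul, sum_col_of_mem_doublyStochastic (overlap_mem_doublyStochastic U V),
    one_mul]

theorem IsDiagonalizedBy.star_mul_mul_apply_self {ρ : Matrix ι ι ℂ} {U : unitaryGroup ι ℂ}
    {p : ι → ℝ} (h : IsDiagonalizedBy ρ U p) (V : unitaryGroup ι ℂ) (j : ι) :
    (star (V : Matrix ι ι ℂ) * ρ * V) j j = ((∑ i, overlap U V i j * p i : ℝ) : ℂ) := by
  have hconj : star (V : Matrix ι ι ℂ) * ρ * V =
      star (star (U : Matrix ι ι ℂ) * V) * diagonal (fun i => (p i : ℂ)) *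
        (star (U : Matrix ι ι ℂ) * V) := by
    rw [h, star_mul, star_star]
    simp only [mul_assoc]
  rw [hconj, mul_apply, Complex.ofReal_sum]
  refine Finset.sum_congr rfl fun i _ => ?_
  rw [mul_diagonal, star_apply, overlap, map_apply, Complex.ofReal_mul, ← Complex.mul_conj,
    starRingEnd_apply]
  ring

end Overlap

/-! ### Mixtures of operators -/

section Mixture

open Matrix

variable {A B ι : Type*} [Fintype A] [Fintype B]

/-- The average output `PW = Σ_a P(a) W(a)`. -/
noncomputable def mixture (P : A → ℝ) (W : A → Matrix ι ι ℂ) : Matrix ι ι ℂ :=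
  ∑ a, (P a : ℂ) • W a

variable {P : A → ℝ} {W : A → Matrix ι ι ℂ}

theorem mixture_const (hP : ∑ a, P a = 1) (ρ : Matrix ι ι ℂ) : mixture P (fun _ => ρ) = ρ := by
  rw [mixture, ← Finset.sum_smul, ← Complex.ofReal_sum, hP, Complex.ofReal_one, one_smul]

theorem mixture_add (P : A → ℝ) (V W : A → Matrix ι ι ℂ) :
    mixture P (fun a => V a + W a) = mixture P V + mixture P W := by
  simp only [mixture, smul_add, Finset.sum_add_distrib]

theorem mixture_comm (P : A → ℝ) (Q : B → ℝ) (W : A → B → Matrix ι ι ℂ) :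
    mixture P (fun a => mixture Q (W a)) = mixture Q (fun b => mixture P fun a => W a b) := by
  simp only [mixture, Finset.smul_sum]
  rw [Finset.sum_comm]
  exact Finset.sum_congr rfl fun b _ => Finset.sum_congr rfl fun a _ => smul_comm _ _ _

theorem mixture_mul_prod (P : A → ℝ) (Q : B → ℝ) (W : A → B → Matrix ι ι ℂ) :
    mixture (fun ab : A × B => P ab.1 * Q ab.2) (fun ab => W ab.1 ab.2) =
      mixture P fun a => mixture Q (W a) := by
  simp only [mixture, Fintype.sum_prod_type, Complex.ofReal_mul, mul_smul, Finset.smul_sum]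

theorem isHermitian_mixture (P : A → ℝ) (hW : ∀ a, (W a).IsHermitian) :
    (mixture P W).IsHermitian := by
  simp only [IsHermitian, mixture, conjTranspose_sum, conjTranspose_smul, (hW _).eq,
    Complex.star_def, Complex.conj_ofReal]

theorem posSemidef_mixture (hP : ∀ a, 0 ≤ P a) (hW : ∀ a, (W a).PosSemidef) :
    (mixture P W).PosSemidef :=
  posSemidef_sum _ fun a _ => (hW a).smul (Complex.zero_le_real.2 (hP a))

theorem posDef_mixture (hP : IsDist P) (hW : ∀ a, (W a).PosDef) : (mixture P W).PosDef := by
  obtain ⟨a, -, ha⟩ := Finset.exists_lt_of_sum_lt (s := Finset.univ) (f := fun _ => 0) (g := P)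
    (by simp [hP.2])
  classical
  rw [mixture, ← Finset.add_sum_erase _ _ (Finset.mem_univ a)]
  exact ((hW a).smul (Complex.zero_lt_real.2 ha)).add_posSemidef
    (posSemidef_sum _ fun b _ => (hW b).posSemidef.smul (Complex.zero_le_real.2 (hP.1 b)))

theorem posDef_add_smul_one [DecidableEq ι] {ρ : Matrix ι ι ℂ} (hρ : ρ.PosSemidef) {s : ℝ}
    (hs : 0 < s) : (ρ + (s : ℂ) • 1).PosDef :=
  PosDef.posSemidef_add hρ (PosDef.one.smul (Complex.zero_lt_real.2 hs))

theorem mixture_add_smul_one [DecidableEq ι] (hP : ∑ a, P a = 1) (W : A → Matrix ι ι ℂ)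
    (s : ℝ) :
    mixture P (fun a => W a + (s : ℂ) • 1) = mixture P W + (s : ℂ) • 1 := by
  rw [mixture_add, mixture_const hP]

theorem re_trace_mixture_mul [Fintype ι] (P : A → ℝ) (W : A → Matrix ι ι ℂ) (T : Matrix ι ι ℂ) :
    (mixture P W * T).trace.re = ∑ a, P a * (W a * T).trace.re := by
  simp only [mixture, Matrix.sum_mul, Matrix.smul_mul, trace_sum, trace_smul, smul_eq_mul,
    Complex.re_sum, Complex.re_ofReal_mul]

theorem isState_mixture [Fintype ι] (hP : IsDist P) (hW : ∀ a, IsState (W a)) :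
    IsState (mixture P W) := by
  refine ⟨posSemidef_mixture hP.1 fun a => (hW a).1, ?_⟩
  simp only [mixture, trace_sum, trace_smul, (hW _).2, smul_eq_mul, mul_one]
  exact_mod_cast hP.2

end Mixture

/-! ### Relative entropy as an integral of quadratic divergences -/

section ScalarRelEntropy

open MeasureTheory Set Filter Topology

/-- The relative entropy of two unnormalized masses `p` and `q`; the terms `- p + q` make it
nonnegative. -/
noncomputable def scalarRelEntropy (p q : ℝ) : ℝ := p * Real.log p - p * Real.log q - p + q

/-- The `χ²`-type divergences whose mixture over `t` with weight `chiSqWeight` is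
`scalarRelEntropy`. -/
noncomputable def scalarChiSq (t p q : ℝ) : ℝ := (p - q) ^ 2 / (t * q + p)

/-- The weight that turns the divergences `scalarChiSq t` into the relative entropy. -/
noncomputable def chiSqWeight (t : ℝ) : ℝ := t / (1 + t) ^ 2

/-- An antiderivative of `t ↦ scalarChiSq t p q * chiSqWeight t` vanishing at infinity. -/
noncomputable def chiSqPrimitive (p q t : ℝ) : ℝ :=
  p * (Real.log (1 + t) + Real.log q - Real.log (t * q + p)) - (q - p) / (1 + t)

theorem chiSqWeight_nonneg {t : ℝ} (ht : 0 < t) : 0 ≤ chiSqWeight t := by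
  unfold chiSqWeight; positivity

variable {p q : ℝ}

theorem scalarChiSq_mul_chiSqWeight_nonneg (hp : 0 < p) (hq : 0 < q) {t : ℝ} (ht : 0 < t) :
    0 ≤ scalarChiSq t p q * chiSqWeight t :=
  mul_nonneg (by unfold scalarChiSq; positivity) (chiSqWeight_nonneg ht)

theorem hasDerivAt_chiSqPrimitive (hp : 0 < p) (hq : 0 < q) {t : ℝ} (ht : 0 ≤ t) :
    HasDerivAt (chiSqPrimitive p q) (scalarChiSq t p q * chiSqWeight t) t := by
  have hne₁ : 1 + t ≠ 0 := by positivity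
  have hne₂ : t * q + p ≠ 0 := by positivity
  have hderiv₁ : HasDerivAt (fun t : ℝ => 1 + t) 1 t := (hasDerivAt_id t).const_add 1
  have hderiv₂ : HasDerivAt (fun t : ℝ => t * q + p) q t := by
    simpa using ((hasDerivAt_id t).mul_const q).add_const p
  refine (((((hderiv₁.log hne₁).add_const (Real.log q)).sub (hderiv₂.log hne₂)).const_mul p).sub
    ((hasDerivAt_const t (q - p)).div hderiv₁ hne₁)).congr_deriv ?_
  rw [scalarChiSq, chiSqWeight]
  field_simp
  ring

theorem tendsto_chiSqPrimitive_atTop (hp : 0 < p) (hq : 0 < q) :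
    Tendsto (chiSqPrimitive p q) atTop (𝓝 0) := by
  have hinv : Tendsto (fun t : ℝ => (1 + t)⁻¹) atTop (𝓝 0) :=
    tendsto_inv_atTop_zero.comp (tendsto_atTop_add_const_left _ _ tendsto_id)
  have hratio : Tendsto (fun t : ℝ => 1 + (p - q) / q * (1 + t)⁻¹) atTop (𝓝 1) := by
    simpa using (hinv.const_mul ((p - q) / q)).const_add 1
  have hlim := ((hratio.log one_ne_zero).const_mul (-p)).sub (hinv.const_mul (q - p))
  rw [Real.log_one, mul_zero, mul_zero, sub_zero] at hlim
  refine hlim.congr' ?_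
  filter_upwards [eventually_ge_atTop 0] with t ht
  have hpos₁ : 0 < 1 + t := by positivity
  have hpos₂ : 0 < t * q + p := by positivity
  have hratio_eq : 1 + (p - q) / q * (1 + t)⁻¹ = (t * q + p) / (q * (1 + t)) := by
    field_simp
    ring
  rw [hratio_eq, Real.log_div hpos₂.ne' (by positivity), Real.log_mul hq.ne' hpos₁.ne',
    chiSqPrimitive]
  ring

theorem integrableOn_scalarChiSq (hp : 0 < p) (hq : 0 < q) :
    IntegrableOn (fun t => scalarChiSq t p q * chiSqWeight t) (Ioi 0) :=
  integrableOn_Ioi_deriv_of_nonneg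
    (hasDerivAt_chiSqPrimitive hp hq le_rfl).continuousAt.continuousWithinAt
    (fun _ ht => hasDerivAt_chiSqPrimitive hp hq (le_of_lt ht))
    (fun _ ht => scalarChiSq_mul_chiSqWeight_nonneg hp hq ht) (tendsto_chiSqPrimitive_atTop hp hq)

theorem integral_scalarChiSq (hp : 0 < p) (hq : 0 < q) :
    ∫ t in Ioi 0, scalarChiSq t p q * chiSqWeight t = scalarRelEntropy p q := by
  rw [integral_Ioi_of_hasDerivAt_of_nonneg
    (hasDerivAt_chiSqPrimitive hp hq le_rfl).continuousAt.continuousWithinAt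
    (fun _ ht => hasDerivAt_chiSqPrimitive hp hq (le_of_lt ht))
    (fun _ ht => scalarChiSq_mul_chiSqWeight_nonneg hp hq ht) (tendsto_chiSqPrimitive_atTop hp hq),
    chiSqPrimitive, scalarRelEntropy]
  simp only [add_zero, Real.log_one, zero_add, zero_mul, div_one]
  ring

theorem mul_log_sub_le_scalarRelEntropy (hp : 0 < p) (hq : 0 < q) {c : ℝ} (hc : 0 < c) :
    p * Real.log c - (c - 1) * q ≤ scalarRelEntropy p q := by
  have hlog := Real.log_le_sub_one_of_pos (x := c * q / p) (by positivity)
  rw [Real.log_div (by positivity) hp.ne', Real.log_mul hc.ne' hq.ne'] at hlog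
  have hmul := mul_le_mul_of_nonneg_left hlog hp.le
  have hcancel : p * (c * q / p - 1) = c * q - p := by field_simp
  rw [hcancel] at hmul
  rw [scalarRelEntropy]
  linarith

end ScalarRelEntropy

section ChiSqForm

open Matrix

variable {ι : Type*} [Fintype ι]

/-- The concave quadratic form whose maximum over `Y` is the quantum counterpart of
`scalarChiSq t`. -/
noncomputable def chiSqForm (t : ℝ) (ρ σ Y : Matrix ι ι ℂ) : ℝ :=
  2 * ((ρ - σ) * Y).trace.re - t * (σ * (Y * Yᴴ)).trace.re - (ρ * (Yᴴ * Y)).trace.re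

/-- The quantum counterpart of `scalarChiSq t`, by Kosaki's variational formula. It is a maximum for
positive definite `ρ` and `σ` and `0 < t`. -/
noncomputable def quantumChiSq (t : ℝ) (ρ σ : Matrix ι ι ℂ) : ℝ := ⨆ Y, chiSqForm t ρ σ Y

theorem re_conjTranspose_mul_self_apply_self (A : Matrix ι ι ℂ) (i : ι) :
    ((Aᴴ * A) i i).re = ∑ j, Complex.normSq (A j i) := by
  simp only [Matrix.mul_apply, conjTranspose_apply, ← starRingEnd_apply,
    ← Complex.normSq_eq_conj_mul_self, Complex.re_sum, Complex.ofReal_re]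

theorem chiSqForm_mixture {A : Type*} [Fintype A] (P : A → ℝ) (ρ σ : A → Matrix ι ι ℂ) (t : ℝ)
    (Y : Matrix ι ι ℂ) :
    chiSqForm t (mixture P ρ) (mixture P σ) Y =
      ∑ a, P a * chiSqForm t (ρ a) (σ a) Y := by
  unfold chiSqForm mixture
  rw [← Finset.sum_sub_distrib]
  simp only [← smul_sub, Matrix.sum_mul, trace_sum, Complex.re_sum, Matrix.smul_mul, trace_smul,
    smul_eq_mul, Complex.re_ofReal_mul, Finset.mul_sum, ← Finset.sum_sub_distrib]
  exact Finset.sum_congr rfl fun a _ => by ring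

theorem chiSqForm_smul {ρ σ T : Matrix ι ι ℂ} (hT : T.IsHermitian) (t a : ℝ) :
    chiSqForm t ρ σ ((a : ℂ) • T) = 2 * a * ((ρ * T).trace.re - (σ * T).trace.re) -
      a ^ 2 * (t * (σ * (T * T)).trace.re + (ρ * (T * T)).trace.re) := by
  simp only [chiSqForm, conjTranspose_smul, hT.eq, Matrix.smul_mul, Matrix.mul_smul, trace_smul,
    smul_eq_mul, Complex.star_def, Complex.conj_ofReal, Complex.re_ofReal_mul, Matrix.sub_mul,
    trace_sub, Complex.sub_re]
  ring

end ChiSqForm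

section ChiSqMax

open Matrix Set

variable {ι : Type*} [Fintype ι] [DecidableEq ι] {ρ σ : Matrix ι ι ℂ}
  {U V : unitaryGroup ι ℂ} {p q : ι → ℝ}

theorem chiSqForm_eq_sum (hρ : IsDiagonalizedBy ρ U p) (hσ : IsDiagonalizedBy σ V q) (t : ℝ)
    (y : Matrix ι ι ℂ) :
    chiSqForm t ρ σ (V * y * star (U : Matrix ι ι ℂ)) = ∑ i, ∑ j,
      (2 * (p i - q j) * ((star (U : Matrix ι ι ℂ) * V) i j * y j i).re
        - (t * q j + p i) * Complex.normSq (y j i)) := by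
  have hU := UnitaryGroup.star_mul_self U
  have hV := UnitaryGroup.star_mul_self V
  set Y := (V : Matrix ι ι ℂ) * y * star (U : Matrix ι ι ℂ) with hY
  have hYstar : Yᴴ = U * yᴴ * star (V : Matrix ι ι ℂ) := by
    simp only [hY, ← star_eq_conjTranspose, star_mul, star_star, mul_assoc]
  have hρY : star (U : Matrix ι ι ℂ) * Y * U = star (U : Matrix ι ι ℂ) * V * y := by
    simp only [hY, mul_assoc, hU, mul_one]
  have hσY : star (V : Matrix ι ι ℂ) * Y * V = y * (star (U : Matrix ι ι ℂ) * V) := by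
    simp only [hY, ← mul_assoc, hV, one_mul]
  have hρYY : star (U : Matrix ι ι ℂ) * (Yᴴ * Y) * U = yᴴ * y := by
    rw [hYstar, hY]
    simp only [mul_assoc, hU, mul_one, ← mul_assoc (star (V : Matrix ι ι ℂ)), hV,
      ← mul_assoc (star (U : Matrix ι ι ℂ)), one_mul]
  have hσYY : star (V : Matrix ι ι ℂ) * (Y * Yᴴ) * V = yᴴᴴ * yᴴ := by
    rw [hYstar, hY, conjTranspose_conjTranspose]
    simp only [mul_assoc, hV, mul_one, ← mul_assoc (star (U : Matrix ι ι ℂ)), hU,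
      ← mul_assoc (star (V : Matrix ι ι ℂ)), one_mul]
  rw [chiSqForm, sub_mul, trace_sub, Complex.sub_re, hρ.re_trace_mul, hρ.re_trace_mul,
    hσ.re_trace_mul, hσ.re_trace_mul, hρY, hσY, hρYY, hσYY]
  generalize star (U : Matrix ι ι ℂ) * V = Z
  simp only [re_conjTranspose_mul_self_apply_self, conjTranspose_apply, Complex.star_def,
    Complex.normSq_conj]
  simp only [Matrix.mul_apply, Complex.re_sum, mul_comm (y _ _), Finset.mul_sum]
  rw [Finset.sum_comm (f := fun j i => q j * _), Finset.sum_comm (f := fun j i => t * (q j * _))]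
  simp only [← Finset.sum_sub_distrib, Finset.mul_sum]
  exact Finset.sum_congr rfl fun i _ => Finset.sum_congr rfl fun j _ => by ring

theorem chiSqForm_le_sum (hρ : IsDiagonalizedBy ρ U p) (hσ : IsDiagonalizedBy σ V q)
    (hp : ∀ i, 0 < p i) (hq : ∀ i, 0 < q i) {t : ℝ} (ht : 0 < t) (Y : Matrix ι ι ℂ) :
    chiSqForm t ρ σ Y ≤ ∑ i, ∑ j, overlap U V i j * scalarChiSq t (p i) (q j) := by
  obtain ⟨y, rfl⟩ : ∃ y, Y = V * y * star (U : Matrix ι ι ℂ) := by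
    refine ⟨star (V : Matrix ι ι ℂ) * Y * U, ?_⟩
    simp only [mul_assoc, Unitary.mul_star_self_of_mem U.2, mul_one]
    rw [← mul_assoc, Unitary.mul_star_self_of_mem V.2, one_mul]
  rw [chiSqForm_eq_sum hρ hσ]
  refine Finset.sum_le_sum fun i _ => Finset.sum_le_sum fun j _ => ?_
  rw [overlap, map_apply, scalarChiSq]
  generalize (star (U : Matrix ι ι ℂ) * V) i j = z
  generalize y j i = w
  have hs : 0 < t * q j + p i := add_pos (mul_pos ht (hq j)) (hp i)
  generalize t * q j + p i = s at hs ⊢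
  generalize p i - q j = d
  -- completing the square: the difference is `|d z̄ - s w|² / s`
  rw [← mul_div_assoc, le_div_iff₀ hs, Complex.normSq_apply, Complex.normSq_apply, Complex.mul_re]
  nlinarith [sq_nonneg (d * z.re - s * w.re), sq_nonneg (d * z.im + s * w.im)]

theorem exists_chiSqForm_eq_sum (hρ : IsDiagonalizedBy ρ U p) (hσ : IsDiagonalizedBy σ V q)
    (hp : ∀ i, 0 < p i) (hq : ∀ i, 0 < q i) {t : ℝ} (ht : 0 < t) :
    ∃ Y, chiSqForm t ρ σ Y = ∑ i, ∑ j, overlap U V i j * scalarChiSq t (p i) (q j) := by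
  let y : Matrix ι ι ℂ := Matrix.of fun j i =>
    (((p i - q j) / (t * q j + p i) : ℝ) : ℂ) * star ((star (U : Matrix ι ι ℂ) * V) i j)
  refine ⟨V * y * star (U : Matrix ι ι ℂ), ?_⟩
  rw [chiSqForm_eq_sum hρ hσ]
  refine Finset.sum_congr rfl fun i _ => Finset.sum_congr rfl fun j _ => ?_
  have hs : t * q j + p i ≠ 0 := (add_pos (mul_pos ht (hq j)) (hp i)).ne'
  simp only [y, Matrix.of_apply, overlap, map_apply, scalarChiSq]
  generalize (star (U : Matrix ι ι ℂ) * V) i j = z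
  rw [mul_left_comm, ← starRingEnd_apply, Complex.mul_conj, Complex.normSq_mul,
    Complex.normSq_ofReal, Complex.normSq_conj, Complex.re_ofReal_mul, Complex.ofReal_re]
  field_simp [hs]
  ring

theorem isGreatest_sum_overlap_mul_scalarChiSq (hρ : IsDiagonalizedBy ρ U p)
    (hσ : IsDiagonalizedBy σ V q) (hp : ∀ i, 0 < p i) (hq : ∀ i, 0 < q i) {t : ℝ} (ht : 0 < t) :
    IsGreatest (range (chiSqForm t ρ σ))
      (∑ i, ∑ j, overlap U V i j * scalarChiSq t (p i) (q j)) :=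
  ⟨exists_chiSqForm_eq_sum hρ hσ hp hq ht,
    forall_mem_range.2 fun Y => chiSqForm_le_sum hρ hσ hp hq ht Y⟩

theorem eqOn_quantumChiSq_mul_chiSqWeight (hρ : ρ.PosDef) (hσ : σ.PosDef) :
    EqOn (fun t => quantumChiSq t ρ σ * chiSqWeight t)
      (fun t => ∑ i, ∑ j, overlap hρ.1.eigenvectorUnitary hσ.1.eigenvectorUnitary i j *
        (scalarChiSq t (hρ.1.eigenvalues i) (hσ.1.eigenvalues j) * chiSqWeight t)) (Ioi 0) := by
  intro t ht
  have hρdiag := isDiagonalizedBy_eigenvalues hρ.1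
  have hσdiag := isDiagonalizedBy_eigenvalues hσ.1
  have hmax := isGreatest_sum_overlap_mul_scalarChiSq hρdiag hσdiag (hρdiag.pos hρ)
    (hσdiag.pos hσ) ht
  simp only [quantumChiSq, iSup, hmax.csSup_eq, Finset.sum_mul, mul_assoc]

end ChiSqMax

section QuantumChiSq

open Matrix MeasureTheory Set

variable {ι : Type*} [Fintype ι] {ρ σ : Matrix ι ι ℂ}

theorem isGreatest_quantumChiSq (hρ : ρ.PosDef) (hσ : σ.PosDef) {t : ℝ} (ht : 0 < t) :
    IsGreatest (range (chiSqForm t ρ σ)) (quantumChiSq t ρ σ) := by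
  classical
  have hρdiag := isDiagonalizedBy_eigenvalues hρ.1
  have hσdiag := isDiagonalizedBy_eigenvalues hσ.1
  have hmax := isGreatest_sum_overlap_mul_scalarChiSq hρdiag hσdiag (hρdiag.pos hρ)
    (hσdiag.pos hσ) ht
  rwa [quantumChiSq, iSup, hmax.csSup_eq]

theorem quantumChiSq_nonneg (hρ : ρ.PosDef) (hσ : σ.PosDef) {t : ℝ} (ht : 0 < t) :
    0 ≤ quantumChiSq t ρ σ :=
  (isGreatest_quantumChiSq hρ hσ ht).2 ⟨0, by simp [chiSqForm]⟩

theorem integrableOn_quantumChiSq (hρ : ρ.PosDef) (hσ : σ.PosDef) :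
    IntegrableOn (fun t => quantumChiSq t ρ σ * chiSqWeight t) (Ioi 0) := by
  classical
  rw [integrableOn_congr_fun (eqOn_quantumChiSq_mul_chiSqWeight hρ hσ) measurableSet_Ioi]
  exact integrable_finsetSum _ fun i _ => integrable_finsetSum _ fun j _ =>
    (integrableOn_scalarChiSq (hρ.eigenvalues_pos i) (hσ.eigenvalues_pos j)).const_mul _

end QuantumChiSq

section RelEntropy

open Matrix MeasureTheory Set

variable {ι : Type*} [Fintype ι] [DecidableEq ι] {ρ σ : Matrix ι ι ℂ}

/-- The quantum relative entropy, in nats, of two positive definite operators. The terms `- ρ + σ`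
cancel for states and make the integral representation hold without normalization. -/
noncomputable def relEntropy (ρ σ : Matrix ι ι ℂ) : ℝ :=
  (ρ * (cfc Real.log ρ - cfc Real.log σ) - ρ + σ).trace.re

theorem relEntropy_eq_sum (hρ : ρ.IsHermitian) (hσ : σ.IsHermitian) :
    relEntropy ρ σ = ∑ i, ∑ j, overlap hρ.eigenvectorUnitary hσ.eigenvectorUnitary i j *
      scalarRelEntropy (hρ.eigenvalues i) (hσ.eigenvalues j) := by
  have hρdiag := isDiagonalizedBy_eigenvalues hρ
  have hσdiag := isDiagonalizedBy_eigenvalues hσ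
  set U := hρ.eigenvectorUnitary
  set V := hσ.eigenvectorUnitary
  set p := hρ.eigenvalues
  set q := hσ.eigenvalues
  have hcross : (ρ * cfc Real.log σ).trace.re =
      ∑ i, ∑ j, overlap U V i j * (p i * Real.log (q j)) := by
    rw [trace_mul_comm, (isDiagonalizedBy_cfc hσ _).re_trace_mul, Finset.sum_comm]
    refine Finset.sum_congr rfl fun j _ => ?_
    rw [hρdiag.star_mul_mul_apply_self, Complex.ofReal_re, Finset.mul_sum]
    exact Finset.sum_congr rfl fun i _ => by simp only [Function.comp_apply, q]; ring
  have hself : (ρ * cfc Real.log ρ).trace.re =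
      ∑ i, ∑ j, overlap U V i j * (p i * Real.log (p i)) := by
    rw [sum_overlap_mul_left, ← neg_neg (ρ * cfc Real.log ρ).trace.re,
      ← vnEntropy_mul_log_two_eq_neg_trace hρ, hρdiag.vnEntropy_mul_log_two,
      ← Finset.sum_neg_distrib]
    exact Finset.sum_congr rfl fun i _ => by rw [Real.negMulLog]; ring
  rw [relEntropy, mul_sub, trace_add, trace_sub, trace_sub, Complex.add_re, Complex.sub_re,
    Complex.sub_re, hcross, hself, hρdiag.trace_eq, hσdiag.trace_eq, Complex.ofReal_re,
    Complex.ofReal_re, ← sum_overlap_mul_left U V p, ← sum_overlap_mul_right U V q]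
  simp only [← Finset.sum_sub_distrib, ← Finset.sum_add_distrib]
  refine Finset.sum_congr rfl fun i _ => Finset.sum_congr rfl fun j _ => ?_
  rw [scalarRelEntropy]
  ring

theorem integral_quantumChiSq (hρ : ρ.PosDef) (hσ : σ.PosDef) :
    ∫ t in Ioi 0, quantumChiSq t ρ σ * chiSqWeight t = relEntropy ρ σ := by
  have hint := fun i j => (integrableOn_scalarChiSq (hρ.eigenvalues_pos i)
    (hσ.eigenvalues_pos j)).const_mul
    (overlap hρ.1.eigenvectorUnitary hσ.1.eigenvectorUnitary i j)
  rw [setIntegral_congr_fun measurableSet_Ioi (eqOn_quantumChiSq_mul_chiSqWeight hρ hσ),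
    integral_finsetSum _ fun i _ => integrable_finsetSum _ fun j _ => hint i j,
    relEntropy_eq_sum hρ.1 hσ.1]
  refine Finset.sum_congr rfl fun i _ => ?_
  rw [integral_finsetSum _ fun j _ => hint i j]
  refine Finset.sum_congr rfl fun j _ => ?_
  rw [integral_const_mul, integral_scalarChiSq (hρ.eigenvalues_pos i) (hσ.eigenvalues_pos j)]

theorem relEntropy_nonneg (hρ : ρ.PosDef) (hσ : σ.PosDef) : 0 ≤ relEntropy ρ σ := by
  rw [← integral_quantumChiSq hρ hσ]
  exact setIntegral_nonneg measurableSet_Ioi fun t ht =>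
    mul_nonneg (quantumChiSq_nonneg hρ hσ ht) (chiSqWeight_nonneg ht)

-- A maximum of forms that are linear in `(ρ, σ)` is jointly convex, and integration preserves this.
theorem relEntropy_mixture_le {A : Type*} [Fintype A] {P : A → ℝ} (hP : ∀ a, 0 ≤ P a)
    {ρ σ : A → Matrix ι ι ℂ} (hρ : ∀ a, (ρ a).PosDef) (hσ : ∀ a, (σ a).PosDef)
    (hρP : (mixture P ρ).PosDef) (hσP : (mixture P σ).PosDef) :
    relEntropy (mixture P ρ) (mixture P σ) ≤
      ∑ a, P a * relEntropy (ρ a) (σ a) := by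
  have hint := fun a => (integrableOn_quantumChiSq (hρ a) (hσ a)).const_mul (P a)
  simp only [← integral_quantumChiSq, hρ, hσ, hρP, hσP, ← integral_const_mul]
  rw [← integral_finsetSum _ fun a _ => hint a]
  refine setIntegral_mono_on (integrableOn_quantumChiSq hρP hσP)
    (integrable_finsetSum _ fun a _ => hint a) measurableSet_Ioi fun t (ht : 0 < t) => ?_
  obtain ⟨Y, hY⟩ := (isGreatest_quantumChiSq hρP hσP ht).1
  calc quantumChiSq t (mixture P ρ) (mixture P σ) * chiSqWeight t
      = (∑ a, P a * chiSqForm t (ρ a) (σ a) Y) * chiSqWeight t := by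
        rw [← hY, chiSqForm_mixture]
    _ ≤ (∑ a, P a * quantumChiSq t (ρ a) (σ a)) * chiSqWeight t := by
        have hle := fun a => (isGreatest_quantumChiSq (hρ a) (hσ a) ht).2 (mem_range_self Y)
        exact mul_le_mul_of_nonneg_right (Finset.sum_le_sum fun a _ =>
          mul_le_mul_of_nonneg_left (hle a) (hP a)) (chiSqWeight_nonneg ht)
    _ = ∑ a, P a * (quantumChiSq t (ρ a) (σ a) * chiSqWeight t) := by
        simp only [Finset.sum_mul, mul_assoc]

theorem posSemidef_sub_mul_self {T : Matrix ι ι ℂ} (hT : T.PosSemidef)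
    (hT1 : (1 - T).PosSemidef) : (T - T * T).PosSemidef := by
  have hsplit : T - T * T = Tᴴ * (1 - T) * T + (1 - T)ᴴ * T * (1 - T) := by
    rw [hT.1.eq, hT1.1.eq]
    noncomm_ring
  rw [hsplit]
  exact (hT1.conjTranspose_mul_mul_same T).add (hT.conjTranspose_mul_mul_same (1 - T))

theorem re_trace_mul_mul_self_le {T : Matrix ι ι ℂ} (hρ : ρ.PosSemidef) (hT : T.PosSemidef)
    (hT1 : (1 - T).PosSemidef) : (ρ * (T * T)).trace.re ≤ (ρ * T).trace.re := by
  have hnonneg := re_trace_mul_nonneg hρ (posSemidef_sub_mul_self hT hT1)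
  rwa [mul_sub, trace_sub, Complex.sub_re, sub_nonneg] at hnonneg

theorem scalarChiSq_re_trace_le {T : Matrix ι ι ℂ} (hρ : ρ.PosDef) (hσ : σ.PosDef)
    (hT : T.PosSemidef) (hT1 : (1 - T).PosSemidef) (hT0 : T ≠ 0) {t : ℝ} (ht : 0 < t) :
    scalarChiSq t (ρ * T).trace.re (σ * T).trace.re ≤ quantumChiSq t ρ σ := by
  have hp := re_trace_mul_pos hρ hT hT0
  have hq := re_trace_mul_pos hσ hT hT0
  set p := (ρ * T).trace.re
  set q := (σ * T).trace.re
  set a := (p - q) / (t * q + p) with ha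
  have hsq : t * (σ * (T * T)).trace.re + (ρ * (T * T)).trace.re ≤ t * q + p :=
    add_le_add
      (mul_le_mul_of_nonneg_left (re_trace_mul_mul_self_le hσ.posSemidef hT hT1) ht.le)
      (re_trace_mul_mul_self_le hρ.posSemidef hT hT1)
  calc scalarChiSq t p q = 2 * a * (p - q) - a ^ 2 * (t * q + p) := by
        rw [scalarChiSq, ha]
        field_simp
        ring
    _ ≤ chiSqForm t ρ σ ((a : ℂ) • T) := by
        rw [chiSqForm_smul hT.1]
        exact sub_le_sub_left (mul_le_mul_of_nonneg_left hsq (sq_nonneg a)) _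
    _ ≤ quantumChiSq t ρ σ := (isGreatest_quantumChiSq hρ hσ ht).2 (mem_range_self _)

theorem scalarRelEntropy_re_trace_le {T : Matrix ι ι ℂ} (hρ : ρ.PosDef) (hσ : σ.PosDef)
    (hT : T.PosSemidef) (hT1 : (1 - T).PosSemidef) (hT0 : T ≠ 0) :
    scalarRelEntropy (ρ * T).trace.re (σ * T).trace.re ≤ relEntropy ρ σ := by
  have hp := re_trace_mul_pos hρ hT hT0
  have hq := re_trace_mul_pos hσ hT hT0
  rw [← integral_scalarChiSq hp hq, ← integral_quantumChiSq hρ hσ]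
  exact setIntegral_mono_on (integrableOn_scalarChiSq hp hq) (integrableOn_quantumChiSq hρ hσ)
    measurableSet_Ioi fun t ht => mul_le_mul_of_nonneg_right
      (scalarChiSq_re_trace_le hρ hσ hT hT1 hT0 ht) (chiSqWeight_nonneg ht)

theorem re_trace_mul_log_sub_le_relEntropy {T : Matrix ι ι ℂ} (hρ : ρ.PosDef) (hσ : σ.PosDef)
    (hT : T.PosSemidef) (hT1 : (1 - T).PosSemidef) {c : ℝ} (hc : 0 < c) :
    (ρ * T).trace.re * Real.log c - (c - 1) * (σ * T).trace.re ≤ relEntropy ρ σ := by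
  rcases eq_or_ne T 0 with rfl | hT0
  · simpa using relEntropy_nonneg hρ hσ
  · exact (mul_log_sub_le_scalarRelEntropy (re_trace_mul_pos hρ hT hT0)
      (re_trace_mul_pos hσ hT hT0) hc).trans (scalarRelEntropy_re_trace_le hρ hσ hT hT1 hT0)

end RelEntropy

/-! ### The Holevo quantity -/

section Holevo

open Matrix Filter Topology

variable {A B ι : Type*} [Fintype A] [Fintype B] [Fintype ι] [DecidableEq ι]

theorem holevo_eq_vnEntropy_mixture_sub (P : A → ℝ) (W : A → Matrix ι ι ℂ) :
    holevo P W = vnEntropy (mixture P W) - ∑ a, P a * vnEntropy (W a) := rfl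

theorem holevo_mul_log_two_eq_sum_relEntropy {P : A → ℝ} (hP : ∑ a, P a = 1)
    {W : A → Matrix ι ι ℂ} (hW : ∀ a, (W a).IsHermitian) :
    holevo P W * Real.log 2 = ∑ a, P a * relEntropy (W a) (mixture P W) := by
  have hmix := isHermitian_mixture P hW
  have htrace := re_trace_mixture_mul P W 1
  simp only [mul_one] at htrace
  have hterm : ∀ a, P a * relEntropy (W a) (mixture P W) =
      -(P a * vnEntropy (W a) * Real.log 2) -
        P a * (W a * cfc Real.log (mixture P W)).trace.re -
        P a * (W a).trace.re + P a * (mixture P W).trace.re := fun a => by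
    rw [relEntropy, mul_sub, trace_add, trace_sub, trace_sub, Complex.add_re, Complex.sub_re,
      Complex.sub_re, mul_assoc (P a), vnEntropy_mul_log_two_eq_neg_trace (hW a)]
    ring
  simp only [hterm, Finset.sum_add_distrib, Finset.sum_sub_distrib, Finset.sum_neg_distrib,
    ← Finset.sum_mul, ← re_trace_mixture_mul, ← htrace, hP]
  rw [holevo_eq_vnEntropy_mixture_sub, sub_mul, vnEntropy_mul_log_two_eq_neg_trace hmix]
  ring

theorem tendsto_vnEntropy_add_smul_one {ρ : Matrix ι ι ℂ} (hρ : ρ.IsHermitian) :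
    Tendsto (fun s : ℝ => vnEntropy (ρ + (s : ℂ) • 1)) (𝓝[>] 0) (𝓝 (vnEntropy ρ)) := by
  have hlog : Real.log 2 ≠ 0 := (Real.log_pos one_lt_two).ne'
  have hdiag := isDiagonalizedBy_eigenvalues hρ
  have hentropy : (fun s : ℝ => vnEntropy (ρ + (s : ℂ) • 1)) =
      fun s => (∑ i, Real.negMulLog (hρ.eigenvalues i + s)) / Real.log 2 := funext fun s => by
    rw [← (hdiag.add_smul_one s).vnEntropy_mul_log_two, mul_div_cancel_right₀ _ hlog]
  have hcont : Continuous fun s : ℝ => vnEntropy (ρ + (s : ℂ) • 1) := by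
    rw [hentropy]
    exact (continuous_finsetSum _ fun i _ =>
      Real.continuous_negMulLog.comp (continuous_const.add continuous_id)).div_const _
  simpa using (hcont.tendsto 0).mono_left nhdsWithin_le_nhds

theorem tendsto_holevo_add_smul_one {P : A → ℝ} (hP : ∑ a, P a = 1) {W : A → Matrix ι ι ℂ}
    (hW : ∀ a, (W a).IsHermitian) :
    Tendsto (fun s : ℝ => holevo P fun a => W a + (s : ℂ) • 1) (𝓝[>] 0) (𝓝 (holevo P W)) := by
  simp only [holevo_eq_vnEntropy_mixture_sub, mixture_add_smul_one hP]
  exact (tendsto_vnEntropy_add_smul_one (isHermitian_mixture P hW)).sub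
    (tendsto_finsetSum _ fun a _ => (tendsto_vnEntropy_add_smul_one (hW a)).const_mul _)

theorem holevo_mixture_le_of_posDef {P : A → ℝ} {Q : B → ℝ} (hP : IsDist P) (hQ : IsDist Q)
    {W : A → B → Matrix ι ι ℂ} (hW : ∀ a b, (W a b).PosDef) :
    holevo P (fun a => mixture Q (W a)) ≤ ∑ b, Q b * holevo P fun a => W a b := by
  have hlog : 0 < Real.log 2 := Real.log_pos one_lt_two
  have hQW := fun a => posDef_mixture hQ (hW a)
  have hPW := fun b => posDef_mixture hP fun a => hW a b
  refine le_of_mul_le_mul_right ?_ hlog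
  calc holevo P (fun a => mixture Q (W a)) * Real.log 2
      = ∑ a, P a * relEntropy (mixture Q (W a)) (mixture Q fun b => mixture P fun a => W a b) := by
        rw [holevo_mul_log_two_eq_sum_relEntropy hP.2 fun a => (hQW a).1, mixture_comm]
    _ ≤ ∑ a, P a * ∑ b, Q b * relEntropy (W a b) (mixture P fun a => W a b) :=
        Finset.sum_le_sum fun a _ => mul_le_mul_of_nonneg_left
          (relEntropy_mixture_le hQ.1 (hW a) hPW (hQW a) (posDef_mixture hQ hPW)) (hP.1 a)
    _ = (∑ b, Q b * holevo P fun a => W a b) * Real.log 2 := by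
        simp only [Finset.sum_mul, mul_assoc,
          holevo_mul_log_two_eq_sum_relEntropy hP.2 fun a => (hW a _).1, Finset.mul_sum]
        rw [Finset.sum_comm]
        exact Finset.sum_congr rfl fun b _ => Finset.sum_congr rfl fun a _ => mul_left_comm _ _ _

theorem holevo_mixture_le {P : A → ℝ} {Q : B → ℝ} (hP : IsDist P) (hQ : IsDist Q)
    {W : A → B → Matrix ι ι ℂ} (hW : ∀ a b, (W a b).PosSemidef) :
    holevo P (fun a => mixture Q (W a)) ≤ ∑ b, Q b * holevo P fun a => W a b := by
  have hleft := tendsto_holevo_add_smul_one hP.2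
    fun a => isHermitian_mixture Q fun b => (hW a b).1
  have hright := tendsto_finsetSum Finset.univ fun b _ =>
    (tendsto_holevo_add_smul_one hP.2 fun a => (hW a b).1).const_mul (Q b)
  refine le_of_tendsto_of_tendsto hleft hright ?_
  filter_upwards [self_mem_nhdsWithin] with s hs
  simpa only [mixture_add_smul_one hQ.2] using
    holevo_mixture_le_of_posDef hP hQ fun a b => posDef_add_smul_one (hW a b) hs

theorem holevo_prod (P : A → ℝ) (Q : B → ℝ) (W : A → B → Matrix ι ι ℂ) :
    holevo (fun ab : A × B => P ab.1 * Q ab.2) (fun ab => W ab.1 ab.2) =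
      holevo P (fun a => mixture Q (W a)) + ∑ a, P a * holevo Q (W a) := by
  simp only [holevo_eq_vnEntropy_mixture_sub, mixture_mul_prod, Fintype.sum_prod_type, mul_sub,
    Finset.sum_sub_distrib, Finset.mul_sum, mul_assoc]
  ring

theorem holevo_prod_le {P : A → ℝ} {Q : B → ℝ} (hP : IsDist P) (hQ : IsDist Q)
    {W : A → B → Matrix ι ι ℂ} (hW : ∀ a b, (W a b).PosSemidef) :
    holevo (fun ab : A × B => P ab.1 * Q ab.2) (fun ab => W ab.1 ab.2) ≤
      (∑ b, Q b * holevo P fun a => W a b) + ∑ a, P a * holevo Q (W a) := by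
  rw [holevo_prod]
  exact add_le_add_left (holevo_mixture_le hP hQ hW) _

end Holevo

/-! ### Decoding -/

section Decoding

open Matrix Filter Topology

/-- The uniform distribution on `M`. -/
noncomputable def uniform (M : Type*) [Fintype M] : M → ℝ := fun _ => (Fintype.card M : ℝ)⁻¹

theorem isDist_uniform (M : Type*) [Fintype M] [Nonempty M] : IsDist (uniform M) := by
  refine ⟨fun _ => by unfold uniform; positivity, ?_⟩
  simp [uniform]

theorem uniform_prod (M N : Type*) [Fintype M] [Fintype N] :
    uniform (M × N) = fun mn => uniform M mn.1 * uniform N mn.2 := by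
  funext mn
  simp only [uniform, Fintype.card_prod, Nat.cast_mul, mul_inv]

variable {M N ι : Type*} [Fintype M] [Fintype N] [Fintype ι]

/-- The success probability of the decoder `D` for uniformly distributed messages `m` encoded as
the operators `W m`. -/
noncomputable def successProb (W D : M → Matrix ι ι ℂ) : ℝ :=
  ∑ m, uniform M m * (W m * D m).trace.re

theorem successProb_eq_sum_fst (W D : M × N → Matrix ι ι ℂ) :
    successProb W D = ∑ n, uniform N n *
      successProb (fun m => W (m, n)) (fun m => D (m, n)) := by
  simp only [successProb, uniform_prod, Fintype.sum_prod_type_right, Finset.mul_sum, mul_left_comm,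
    mul_assoc]

theorem successProb_eq_sum_snd (W D : M × N → Matrix ι ι ℂ) :
    successProb W D = ∑ m, uniform M m *
      successProb (fun n => W (m, n)) (fun n => D (m, n)) := by
  simp only [successProb, uniform_prod, Fintype.sum_prod_type, Finset.mul_sum, mul_assoc]

variable [DecidableEq ι]

theorem IsPOVM.comp_injective {D : M → Matrix ι ι ℂ} (hD : IsPOVM D) {f : N → M}
    (hf : Function.Injective f) : IsPOVM (D ∘ f) := by
  classical
  refine ⟨fun n => hD.1 (f n), ?_⟩
  have hsplit : 1 - ∑ n, D (f n) = (1 - ∑ m, D m) + ∑ m ∈ (Finset.univ.image f)ᶜ, D m := by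
    rw [← Finset.sum_compl_add_sum (Finset.univ.image f), Finset.sum_image hf.injOn]
    abel
  rw [loewnerLE, Function.comp_def, hsplit]
  exact PosSemidef.add hD.2 (posSemidef_sum _ fun m _ => hD.1 m)

theorem IsPOVM.posSemidef_one_sub {D : M → Matrix ι ι ℂ} (hD : IsPOVM D) (m : M) :
    (1 - D m).PosSemidef := by
  have hinj : Function.Injective fun _ : Unit => m := Function.injective_of_subsingleton _
  simpa [loewnerLE] using (hD.comp_injective hinj).2

theorem IsPOVM.sum_re_trace_mul_le {D : M → Matrix ι ι ℂ} (hD : IsPOVM D) {σ : Matrix ι ι ℂ}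
    (hσ : σ.PosSemidef) : ∑ m, (σ * D m).trace.re ≤ σ.trace.re := by
  have hnonneg := re_trace_mul_nonneg hσ hD.2
  rwa [mul_sub, mul_one, trace_sub, Complex.sub_re, Finset.mul_sum, trace_sum, Complex.re_sum,
    sub_nonneg] at hnonneg

theorem successProb_mul_log_sub_le_of_posDef [Nonempty M] {W D : M → Matrix ι ι ℂ}
    (hD : IsPOVM D) (hW : ∀ m, (W m).PosDef) :
    successProb W D * Real.log (Fintype.card M) - (mixture (uniform M) W).trace.re ≤
      holevo (uniform M) W * Real.log 2 := by
  have hcard : 1 ≤ (Fintype.card M : ℝ) := by exact_mod_cast Fintype.card_pos (α := M)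
  have hσ := posDef_mixture (isDist_uniform M) hW
  rw [holevo_mul_log_two_eq_sum_relEntropy (isDist_uniform M).2 fun m => (hW m).1]
  set σ := mixture (uniform M) W
  have hnull : ∑ m, uniform M m * ((Fintype.card M - 1) * (σ * D m).trace.re) ≤ σ.trace.re :=
    calc ∑ m, uniform M m * ((Fintype.card M - 1) * (σ * D m).trace.re)
        ≤ ∑ m, (σ * D m).trace.re := Finset.sum_le_sum fun m _ => by
          have hprob := re_trace_mul_nonneg hσ.posSemidef (hD.1 m)
          rw [uniform, inv_mul_le_iff₀ (by linarith)]
          nlinarith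
      _ ≤ σ.trace.re := hD.sum_re_trace_mul_le hσ.posSemidef
  calc successProb W D * Real.log (Fintype.card M) - σ.trace.re
      ≤ ∑ m, uniform M m * ((W m * D m).trace.re * Real.log (Fintype.card M) -
          (Fintype.card M - 1) * (σ * D m).trace.re) := by
        simp only [mul_sub, Finset.sum_sub_distrib, successProb, Finset.sum_mul, mul_assoc]
        exact sub_le_sub_left (by simpa only [mul_sub, Finset.sum_sub_distrib] using hnull) _
    _ ≤ ∑ m, uniform M m * relEntropy (W m) σ := Finset.sum_le_sum fun m _ =>
        mul_le_mul_of_nonneg_left (re_trace_mul_log_sub_le_relEntropy (hW m) hσ (hD.1 m)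
          (hD.posSemidef_one_sub m) (by linarith)) ((isDist_uniform M).1 m)

theorem tendsto_re_trace_add_smul_one_mul (ρ T : Matrix ι ι ℂ) :
    Tendsto (fun s : ℝ => ((ρ + (s : ℂ) • 1) * T).trace.re) (𝓝[>] 0) (𝓝 (ρ * T).trace.re) := by
  have hcont : Continuous fun s : ℝ => ((ρ + (s : ℂ) • 1) * T).trace.re := by fun_prop
  simpa using (hcont.tendsto 0).mono_left nhdsWithin_le_nhds

theorem successProb_mul_log_sub_le [Nonempty M] {W D : M → Matrix ι ι ℂ} (hD : IsPOVM D)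
    (hW : ∀ m, (W m).PosSemidef) :
    successProb W D * Real.log (Fintype.card M) - (mixture (uniform M) W).trace.re ≤
      holevo (uniform M) W * Real.log 2 := by
  have hdist := isDist_uniform M
  have hsuccess : Tendsto (fun s : ℝ => successProb (fun m => W m + (s : ℂ) • 1) D) (𝓝[>] 0)
      (𝓝 (successProb W D)) := tendsto_finsetSum _ fun m _ =>
    (tendsto_re_trace_add_smul_one_mul (W m) (D m)).const_mul _
  have htrace := tendsto_re_trace_add_smul_one_mul (mixture (uniform M) W) 1
  simp only [mul_one] at htrace
  refine le_of_tendsto_of_tendsto ((hsuccess.mul_const _).sub htrace)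
    ((tendsto_holevo_add_smul_one hdist.2 fun m => (hW m).1).mul_const _) ?_
  filter_upwards [self_mem_nhdsWithin] with s hs
  simpa only [mixture_add_smul_one hdist.2] using
    successProb_mul_log_sub_le_of_posDef hD fun m => posDef_add_smul_one (hW m) hs

theorem successProb_mul_logb_sub_le_holevo [Nonempty M] {W D : M → Matrix ι ι ℂ} (hD : IsPOVM D)
    (hW : ∀ m, IsState (W m)) :
    successProb W D * Real.logb 2 (Fintype.card M) - (Real.log 2)⁻¹ ≤ holevo (uniform M) W := by
  have hlog : 0 < Real.log 2 := Real.log_pos one_lt_two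
  have hnats := successProb_mul_log_sub_le hD fun m => (hW m).1
  rw [(isState_mixture (isDist_uniform M) hW).2, Complex.one_re] at hnats
  refine le_of_mul_le_mul_right (le_of_eq_of_le ?_ hnats) hlog
  rw [Real.logb]
  field_simp

theorem sum_successProb_mul_logb_sub_le [Nonempty M] {Q : N → ℝ} (hQ : IsDist Q)
    {W D : N → M → Matrix ι ι ℂ} (hD : ∀ n, IsPOVM (D n)) (hW : ∀ n m, IsState (W n m)) :
    (∑ n, Q n * successProb (W n) (D n)) * Real.logb 2 (Fintype.card M) - (Real.log 2)⁻¹ ≤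
      ∑ n, Q n * holevo (uniform M) (W n) :=
  calc (∑ n, Q n * successProb (W n) (D n)) * Real.logb 2 (Fintype.card M) - (Real.log 2)⁻¹
      = ∑ n, Q n * (successProb (W n) (D n) * Real.logb 2 (Fintype.card M) - (Real.log 2)⁻¹) := by
        simp only [mul_sub, Finset.sum_sub_distrib, ← Finset.sum_mul, hQ.2, one_mul, ← mul_assoc]
    _ ≤ ∑ n, Q n * holevo (uniform M) (W n) := Finset.sum_le_sum fun n _ =>
        mul_le_mul_of_nonneg_left (successProb_mul_logb_sub_le_holevo (hD n) (hW n)) (hQ.1 n)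

theorem successProb_fst_mul_logb_sub_le [Nonempty M] [Nonempty N] {W D : M × N → Matrix ι ι ℂ}
    (hD : IsPOVM D) (hW : ∀ mn, IsState (W mn)) :
    successProb W D * Real.logb 2 (Fintype.card M) - (Real.log 2)⁻¹ ≤
      ∑ n, uniform N n * holevo (uniform M) fun m => W (m, n) := by
  rw [successProb_eq_sum_fst]
  exact sum_successProb_mul_logb_sub_le (isDist_uniform N)
    (fun n => hD.comp_injective (Prod.mk_left_injective n)) fun n m => hW (m, n)

theorem successProb_snd_mul_logb_sub_le [Nonempty M] [Nonempty N] {W D : M × N → Matrix ι ι ℂ}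
    (hD : IsPOVM D) (hW : ∀ mn, IsState (W mn)) :
    successProb W D * Real.logb 2 (Fintype.card N) - (Real.log 2)⁻¹ ≤
      ∑ m, uniform M m * holevo (uniform N) fun n => W (m, n) := by
  rw [successProb_eq_sum_snd]
  exact sum_successProb_mul_logb_sub_le (isDist_uniform M)
    (fun m => hD.comp_injective (Prod.mk_right_injective m)) fun m n => hW (m, n)

end Decoding

/-! ### Subadditivity -/

section Pushforward

variable {A B C D : Type*} [Fintype A] [Fintype B]

open Classical in
/-- The image of the distribution `P` under the map `f`. -/
noncomputable def pushforward (P : A → ℝ) (f : A → C) (c : C) : ℝ := ∑ a with f a = c, P a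

theorem sum_pushforward_smul {E : Type*} [AddCommGroup E] [Module ℝ E] [Fintype C] (P : A → ℝ)
    (f : A → C) (g : C → E) : ∑ c, pushforward P f c • g c = ∑ a, P a • g (f a) := by
  classical
  rw [← Finset.sum_fiberwise Finset.univ f]
  refine Finset.sum_congr rfl fun c _ => ?_
  rw [pushforward, Finset.sum_smul]
  exact Finset.sum_congr (by congr) fun a ha => by rw [(Finset.mem_filter.1 ha).2]

theorem sum_pushforward_mul [Fintype C] (P : A → ℝ) (f : A → C) (g : C → ℝ) :
    ∑ c, pushforward P f c * g c = ∑ a, P a * g (f a) :=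
  sum_pushforward_smul P f g

theorem pushforward_sum_mul (P : B → ℝ) (R : B → A → ℝ) (f : A → C) (c : C) :
    pushforward (fun a => ∑ b, P b * R b a) f c = ∑ b, P b * pushforward (R b) f c := by
  simp only [pushforward, Finset.mul_sum]
  exact Finset.sum_comm

theorem isDist_pushforward [Fintype C] {P : A → ℝ} (hP : IsDist P) (f : A → C) :
    IsDist (pushforward P f) := by
  refine ⟨fun c => Finset.sum_nonneg fun a _ => hP.1 a, ?_⟩
  simpa only [mul_one, hP.2] using sum_pushforward_mul P f fun _ => 1

theorem pushforward_prod (P : A → ℝ) (Q : B → ℝ) (f : A → C) (g : B → D) :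
    pushforward (fun ab : A × B => P ab.1 * Q ab.2) (Prod.map f g) =
      fun cd => pushforward P f cd.1 * pushforward Q g cd.2 := by
  classical
  funext cd
  simp only [pushforward, Finset.sum_mul_sum, ← Finset.sum_product', Prod.ext_iff, Prod.map_fst,
    Prod.map_snd]
  refine Finset.sum_congr ?_ fun _ _ => rfl
  ext ab
  simp

end Pushforward

section ShannonEntropy

variable {κ ι : Type*} [Fintype κ] [Fintype ι]

theorem sum_negMulLog_le_neg_sum_mul_log {p q : ι → ℝ} (hp : IsDist p) (hq : IsDist q)
    (hpq : ∀ i, q i = 0 → p i = 0) :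
    ∑ i, Real.negMulLog (p i) ≤ -∑ i, p i * Real.log (q i) := by
  have hterm : ∀ i, Real.negMulLog (p i) ≤ -(p i * Real.log (q i)) - p i + q i := fun i => by
    rcases (hp.1 i).eq_or_lt with hpi | hpi
    · simpa [← hpi] using hq.1 i
    · have hqi : 0 < q i := (hq.1 i).lt_of_ne' fun hzero => hpi.ne' (hpq i hzero)
      have hnonneg := mul_log_sub_le_scalarRelEntropy hpi hqi one_pos
      rw [scalarRelEntropy, Real.log_one] at hnonneg
      rw [Real.negMulLog]
      linarith
  refine (Finset.sum_le_sum fun i _ => hterm i).trans_eq ?_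
  rw [Finset.sum_add_distrib, Finset.sum_sub_distrib, Finset.sum_neg_distrib, hp.2, hq.2]
  ring

variable [DecidableEq κ]

theorem isDist_pi {q : κ → ι → ℝ} (hq : ∀ k, IsDist (q k)) :
    IsDist fun i : κ → ι => ∏ k, q k (i k) := by
  refine ⟨fun i => Finset.prod_nonneg fun k _ => (hq k).1 (i k), ?_⟩
  rw [← Fintype.prod_sum]
  exact Finset.prod_eq_one fun k _ => (hq k).2

theorem sum_prod_mul_apply {q : κ → ι → ℝ} (hq : ∀ k, ∑ x, q k x = 1) (k₀ : κ) (g : ι → ℝ) :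
    ∑ i : κ → ι, (∏ k, q k (i k)) * g (i k₀) = ∑ x, q k₀ x * g x := by
  have hterm : ∀ i : κ → ι, (∏ k, q k (i k)) * g (i k₀) =
      ∏ k, q k (i k) * if k = k₀ then g (i k) else 1 := fun i => by
    rw [Finset.prod_mul_distrib, Finset.prod_ite_eq' Finset.univ k₀ fun k => g (i k),
      if_pos (Finset.mem_univ _)]
  simp only [hterm]
  rw [← Fintype.prod_sum fun k x => q k x * if k = k₀ then g x else 1,
    Finset.prod_eq_single k₀ (fun k _ hk => by simp [hk, hq]) (by simp)]
  simp

theorem pushforward_pi_apply {q : κ → ι → ℝ} (hq : ∀ k, ∑ x, q k x = 1) (k₀ : κ) :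
    pushforward (fun i : κ → ι => ∏ k, q k (i k)) (fun i => i k₀) = q k₀ := by
  classical
  funext x
  have hsum := sum_prod_mul_apply hq k₀ fun y => if y = x then 1 else 0
  simpa [pushforward, Finset.sum_filter] using hsum

theorem sum_mul_log_prod_apply {R : (κ → ι) → ℝ} {q : κ → ι → ℝ}
    (hR : ∀ i k, q k (i k) = 0 → R i = 0) :
    ∑ i, R i * Real.log (∏ k, q k (i k)) =
      ∑ k, ∑ x, pushforward R (fun i => i k) x * Real.log (q k x) := by
  have hterm : ∀ i, R i * Real.log (∏ k, q k (i k)) = ∑ k, R i * Real.log (q k (i k)) := fun i => by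
    by_cases hRi : R i = 0
    · simp [hRi]
    · rw [Real.log_prod fun k _ hk => hRi (hR i k hk), Finset.mul_sum]
  simp only [hterm, sum_pushforward_mul]
  exact Finset.sum_comm

theorem sum_negMulLog_prod_apply {q : κ → ι → ℝ} (hq : ∀ k, ∑ x, q k x = 1) :
    ∑ i : κ → ι, Real.negMulLog (∏ k, q k (i k)) = ∑ k, ∑ x, Real.negMulLog (q k x) := by
  simp only [Real.negMulLog, neg_mul, Finset.sum_neg_distrib]
  rw [sum_mul_log_prod_apply fun i k hk => Finset.prod_eq_zero (Finset.mem_univ k) hk]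
  simp only [pushforward_pi_apply hq]

theorem sum_negMulLog_le_sum_pushforward_apply {R : (κ → ι) → ℝ} (hR : IsDist R) :
    ∑ i, Real.negMulLog (R i) ≤
      ∑ k, ∑ x, Real.negMulLog (pushforward R (fun i => i k) x) := by
  classical
  have hsupport : ∀ i k, pushforward R (fun i => i k) (i k) = 0 → R i = 0 := fun i k hzero =>
    (Finset.sum_eq_zero_iff_of_nonneg fun i _ => hR.1 i).1 hzero i (by simp)
  refine (sum_negMulLog_le_neg_sum_mul_log hR
    (isDist_pi fun k => isDist_pushforward hR fun i => i k) fun i hi => ?_).trans_eq ?_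
  · obtain ⟨k, -, hk⟩ := Finset.prod_eq_zero_iff.1 hi
    exact hsupport i k hk
  · rw [sum_mul_log_prod_apply hsupport]
    simp only [Real.negMulLog, neg_mul, Finset.sum_neg_distrib]

end ShannonEntropy

section BasisDist

open Matrix

variable {A ι : Type*} [Fintype A] [Fintype ι] [DecidableEq ι]

/-- The outcome distribution of measuring `ρ` in the orthonormal basis formed by the columns
of `V`. -/
noncomputable def basisDist (ρ : Matrix ι ι ℂ) (V : unitaryGroup ι ℂ) (j : ι) : ℝ :=
  ((star (V : Matrix ι ι ℂ) * ρ * V) j j).re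

theorem ofReal_basisDist {ρ : Matrix ι ι ℂ} (hρ : ρ.IsHermitian) (V : unitaryGroup ι ℂ) (j : ι) :
    (basisDist ρ V j : ℂ) = (star (V : Matrix ι ι ℂ) * ρ * V) j j := by
  rw [basisDist, (isDiagonalizedBy_eigenvalues hρ).star_mul_mul_apply_self, Complex.ofReal_re]

theorem isDist_basisDist {ρ : Matrix ι ι ℂ} (hρ : IsState ρ) (V : unitaryGroup ι ℂ) :
    IsDist (basisDist ρ V) := by
  refine ⟨fun j => (Complex.le_def.1 (hρ.1.conjTranspose_mul_mul_same _).diag_nonneg).1, ?_⟩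
  have htrace : (star (V : Matrix ι ι ℂ) * ρ * V).trace = 1 := by
    rw [trace_mul_comm, ← mul_assoc, Unitary.mul_star_self_of_mem V.2, one_mul, hρ.2]
  simpa only [basisDist, trace, diag_apply, Complex.re_sum, Complex.one_re] using
    congrArg Complex.re htrace

theorem basisDist_mixture (P : A → ℝ) (W : A → Matrix ι ι ℂ) (V : unitaryGroup ι ℂ) (j : ι) :
    basisDist (mixture P W) V j = ∑ a, P a * basisDist (W a) V j := by
  simp only [basisDist, mixture, Matrix.mul_sum, Matrix.sum_mul, Matrix.mul_smul, Matrix.smul_mul,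
    Matrix.sum_apply, Matrix.smul_apply, smul_eq_mul, Complex.re_sum, Complex.re_ofReal_mul]

theorem IsDiagonalizedBy.basisDist_eq {ρ : Matrix ι ι ℂ} {U : unitaryGroup ι ℂ} {p : ι → ℝ}
    (h : IsDiagonalizedBy ρ U p) : basisDist ρ U = p := by
  funext j
  rw [basisDist, h.star_mul_mul, diagonal_apply_eq, Complex.ofReal_re]

theorem vnEntropy_mul_log_two_le_sum_negMulLog_basisDist {ρ : Matrix ι ι ℂ} (hρ : ρ.PosSemidef)
    (V : unitaryGroup ι ℂ) :
    vnEntropy ρ * Real.log 2 ≤ ∑ j, Real.negMulLog (basisDist ρ V j) := by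
  have hdiag := isDiagonalizedBy_eigenvalues hρ.1
  have hstochastic := overlap_mem_doublyStochastic hρ.1.eigenvectorUnitary V
  rw [hdiag.vnEntropy_mul_log_two, ← sum_overlap_mul_left hρ.1.eigenvectorUnitary V,
    Finset.sum_comm]
  refine Finset.sum_le_sum fun j _ => ?_
  rw [basisDist, hdiag.star_mul_mul_apply_self, Complex.ofReal_re]
  exact Real.concaveOn_negMulLog.le_map_sum (p := hρ.1.eigenvalues)
    (fun i _ => nonneg_of_mem_doublyStochastic hstochastic)
    (sum_col_of_mem_doublyStochastic hstochastic j) fun i _ => hdiag.nonneg hρ i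

end BasisDist

section Tensor

open Matrix

variable {n : ℕ} {A ι : Type*} [Fintype A] [Fintype ι]

theorem tensorPow_mul (M N : Fin n → Matrix ι ι ℂ) :
    tensorPow M * tensorPow N = tensorPow fun k => M k * N k := by
  ext i j
  simp only [tensorPow, mul_apply, of_apply, ← Finset.prod_mul_distrib, Fintype.prod_sum]

theorem star_tensorPow (M : Fin n → Matrix ι ι ℂ) :
    star (tensorPow M) = tensorPow fun k => star (M k) := by
  ext i j
  simp only [tensorPow, star_apply, of_apply, star_prod]

theorem trace_tensorPow (M : Fin n → Matrix ι ι ℂ) : (tensorPow M).trace = ∏ k, (M k).trace := by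
  simp only [trace, diag_apply, tensorPow, of_apply, Fintype.prod_sum]

variable [DecidableEq ι]

theorem tensorPow_diagonal (d : Fin n → ι → ℂ) :
    tensorPow (fun k => diagonal (d k)) = diagonal fun i => ∏ k, d k (i k) := by
  ext i j
  rcases eq_or_ne i j with rfl | hij
  · simp [tensorPow]
  · obtain ⟨k, hk⟩ := Function.ne_iff.1 hij
    rw [diagonal_apply_ne _ hij, tensorPow, of_apply]
    exact Finset.prod_eq_zero (Finset.mem_univ k) (diagonal_apply_ne _ hk)

theorem tensorPow_one : tensorPow (fun _ : Fin n => (1 : Matrix ι ι ℂ)) = 1 := by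
  simpa using tensorPow_diagonal fun (_ : Fin n) (_ : ι) => 1

/-- The tensor product of unitaries, bundled as a unitary; its columns form the product basis. -/
def tensorUnitary (U : Fin n → unitaryGroup ι ℂ) : unitaryGroup (Fin n → ι) ℂ :=
  ⟨tensorPow fun k => (U k : Matrix ι ι ℂ), mem_unitaryGroup_iff.2 <| by
    simp only [star_tensorPow, tensorPow_mul, Unitary.mul_star_self_of_mem (U _).2, tensorPow_one]⟩

theorem isDiagonalizedBy_tensorPow {ρ : Fin n → Matrix ι ι ℂ} {U : Fin n → unitaryGroup ι ℂ}
    {p : Fin n → ι → ℝ} (h : ∀ k, IsDiagonalizedBy (ρ k) (U k) (p k)) :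
    IsDiagonalizedBy (tensorPow ρ) (tensorUnitary U) (fun i => ∏ k, p k (i k)) := by
  simp only [IsDiagonalizedBy, tensorUnitary, Complex.ofReal_prod, star_tensorPow,
    ← tensorPow_diagonal fun k x => (p k x : ℂ), tensorPow_mul]
  exact congrArg tensorPow (funext h)

theorem vnEntropy_tensorPow {ρ : Fin n → Matrix ι ι ℂ} (hρ : ∀ k, IsState (ρ k)) :
    vnEntropy (tensorPow ρ) = ∑ k, vnEntropy (ρ k) := by
  have hdiag := fun k => isDiagonalizedBy_eigenvalues (hρ k).1.1
  have hsum : ∀ k, ∑ x, (hρ k).1.1.eigenvalues x = 1 := fun k => by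
    exact_mod_cast (hdiag k).trace_eq.symm.trans (hρ k).2
  refine mul_right_cancel₀ (Real.log_pos one_lt_two).ne' ?_
  rw [(isDiagonalizedBy_tensorPow hdiag).vnEntropy_mul_log_two, sum_negMulLog_prod_apply hsum,
    Finset.sum_mul]
  simp only [(hdiag _).vnEntropy_mul_log_two]

theorem basisDist_tensorPow {ρ : Fin n → Matrix ι ι ℂ} (hρ : ∀ k, (ρ k).IsHermitian)
    (U : Fin n → unitaryGroup ι ℂ) (i : Fin n → ι) :
    basisDist (tensorPow ρ) (tensorUnitary U) i = ∏ k, basisDist (ρ k) (U k) (i k) := by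
  have hentry : (star (tensorUnitary U : Matrix (Fin n → ι) (Fin n → ι) ℂ) * tensorPow ρ *
      (tensorUnitary U : Matrix (Fin n → ι) (Fin n → ι) ℂ)) i i =
      ((∏ k, basisDist (ρ k) (U k) (i k) : ℝ) : ℂ) := by
    simp only [tensorUnitary, star_tensorPow, tensorPow_mul, Complex.ofReal_prod,
      ofReal_basisDist (hρ _)]
    rfl
  rw [basisDist, hentry, Complex.ofReal_re]

theorem pushforward_basisDist_mixture_tensorPow (P : A → ℝ) {ρ : Fin n → A → Matrix ι ι ℂ}
    (hρ : ∀ k a, IsState (ρ k a)) (U : Fin n → unitaryGroup ι ℂ) (k : Fin n) :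
    pushforward (basisDist (mixture P fun a => tensorPow fun k => ρ k a) (tensorUnitary U))
      (fun i => i k) = basisDist (mixture P (ρ k)) (U k) := by
  funext x
  have hmarginal := fun a =>
    pushforward_pi_apply (fun k => (isDist_basisDist (hρ k a) (U k)).2) k
  have hproduct : basisDist (mixture P fun a => tensorPow fun k => ρ k a) (tensorUnitary U) =
      fun i => ∑ a, P a * ∏ k, basisDist (ρ k a) (U k) (i k) := funext fun i => by
    simp only [basisDist_mixture, basisDist_tensorPow fun k => (hρ k _).1.1]
  rw [hproduct, pushforward_sum_mul, basisDist_mixture]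
  simp only [hmarginal]

theorem isState_tensorPow {κ : Type*} [Fintype κ] {ρ : Fin n → Matrix κ κ ℂ}
    (hρ : ∀ k, IsState (ρ k)) : IsState (tensorPow ρ) := by
  classical
  have hdiag := fun k => isDiagonalizedBy_eigenvalues (hρ k).1.1
  refine ⟨?_, by simp only [trace_tensorPow, (hρ _).2, Finset.prod_const_one]⟩
  rw [isDiagonalizedBy_tensorPow hdiag]
  exact (PosSemidef.diagonal fun i => Complex.zero_le_real.2 <|
    Finset.prod_nonneg fun k _ => (hdiag k).nonneg (hρ k).1 (i k)).mul_mul_conjTranspose_same _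

theorem vnEntropy_mixture_tensorPow_le {P : A → ℝ} (hP : IsDist P)
    {ρ : Fin n → A → Matrix ι ι ℂ} (hρ : ∀ k a, IsState (ρ k a)) :
    vnEntropy (mixture P fun a => tensorPow fun k => ρ k a) ≤ ∑ k, vnEntropy (mixture P (ρ k)) := by
  have hdiag := fun k => isDiagonalizedBy_eigenvalues (isState_mixture hP (hρ k)).1.1
  have hstate := isState_mixture hP fun a => isState_tensorPow fun k => hρ k a
  set V := tensorUnitary fun k => (isState_mixture hP (hρ k)).1.1.eigenvectorUnitary with hV
  refine le_of_mul_le_mul_right ?_ (Real.log_pos one_lt_two)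
  calc vnEntropy (mixture P fun a => tensorPow fun k => ρ k a) * Real.log 2
      ≤ ∑ i, Real.negMulLog (basisDist (mixture P fun a => tensorPow fun k => ρ k a) V i) :=
        vnEntropy_mul_log_two_le_sum_negMulLog_basisDist hstate.1 V
    _ ≤ ∑ k, ∑ x, Real.negMulLog (pushforward
          (basisDist (mixture P fun a => tensorPow fun k => ρ k a) V) (fun i => i k) x) :=
        sum_negMulLog_le_sum_pushforward_apply (isDist_basisDist hstate V)
    _ = (∑ k, vnEntropy (mixture P (ρ k))) * Real.log 2 := by
        simp only [hV, pushforward_basisDist_mixture_tensorPow P hρ, (hdiag _).basisDist_eq,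
          Finset.sum_mul, (hdiag _).vnEntropy_mul_log_two]

theorem holevo_tensorPow_le {P : A → ℝ} (hP : IsDist P) {ρ : Fin n → A → Matrix ι ι ℂ}
    (hρ : ∀ k a, IsState (ρ k a)) :
    holevo P (fun a => tensorPow fun k => ρ k a) ≤ ∑ k, holevo P (ρ k) := by
  simp only [holevo_eq_vnEntropy_mixture_sub, vnEntropy_tensorPow fun k => hρ k _,
    Finset.sum_sub_distrib, Finset.mul_sum]
  rw [Finset.sum_comm]
  exact sub_le_sub_right (vnEntropy_mixture_tensorPow_le hP hρ) _

end Tensor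

/-! ### Averaging pentagons -/

section Averaging

variable {κ : Type*} [Fintype κ] [Nonempty κ]

theorem mem_convexHull_of_sum_eq_card_smul {E : Type*} [AddCommGroup E] [Module ℝ E] {S : Set E}
    {p : κ → E} (hp : ∀ k, p k ∈ S) {x : E} (hsum : ∑ k, p k = (Fintype.card κ : ℝ) • x) :
    x ∈ convexHull ℝ S := by
  have hcard : (Fintype.card κ : ℝ) ≠ 0 := by exact_mod_cast Fintype.card_ne_zero
  have hmean : ∑ k, uniform κ k • p k = x := by
    simp only [uniform, ← Finset.smul_sum, hsum, inv_smul_smul₀ hcard]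
  rw [← hmean]
  exact (convex_convexHull ℝ S).sum_mem (fun k _ => (isDist_uniform κ).1 k) (isDist_uniform κ).2
    fun k _ => subset_convexHull ℝ S (hp k)

theorem exists_mul_le_and_one_sub_mul_le {α β δ : ℝ} (hα : 0 ≤ α) (hβ : 0 ≤ β) (hδ : δ ≤ α + β) :
    ∃ θ : ℝ, 0 ≤ θ ∧ θ ≤ 1 ∧ θ * δ ≤ α ∧ (1 - θ) * δ ≤ β := by
  rcases le_or_gt δ α with hle | hlt
  · exact ⟨1, zero_le_one, le_rfl, by linarith, by linarith⟩
  · have hpos : 0 < δ := hα.trans_lt hlt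
    have hcancel : α / δ * δ = α := div_mul_cancel₀ α hpos.ne'
    exact ⟨α / δ, by positivity, (div_le_one hpos).2 hlt.le, hcancel.le, by linarith⟩

-- Each pentagon has the corners `(a, c - b)` and `(c - a, b)`. With one and the same weight for all
-- `k`, their convex combinations sum to a point dominating `(s, t)`; the excess is then spread
-- evenly.
theorem exists_mem_pentagons_sum_eq {a b c : κ → ℝ} (hc : ∀ k, c k ≤ a k + b k) {s t : ℝ}
    (hs : s ≤ ∑ k, a k) (ht : t ≤ ∑ k, b k) (hst : s + t ≤ ∑ k, c k) :
    ∃ p : κ → ℝ × ℝ, (∀ k, (p k).1 ≤ a k ∧ (p k).2 ≤ b k ∧ (p k).1 + (p k).2 ≤ c k) ∧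
      ∑ k, p k = (s, t) := by
  have hcard : (0 : ℝ) < Fintype.card κ := by exact_mod_cast Fintype.card_pos
  set d : κ → ℝ := fun k => a k + b k - c k with hd
  have hdsum : ∑ k, d k = ∑ k, a k + ∑ k, b k - ∑ k, c k := by
    simp only [hd, Finset.sum_sub_distrib, Finset.sum_add_distrib]
  obtain ⟨θ, hθ₀, hθ₁, hθa, hθb⟩ := exists_mul_le_and_one_sub_mul_le (δ := ∑ k, d k)
    (sub_nonneg.2 hs) (sub_nonneg.2 ht) (by linarith)
  set excess₁ : ℝ := (∑ k, a k - s - θ * ∑ k, d k) / Fintype.card κ with hexcess₁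
  set excess₂ : ℝ := (∑ k, b k - t - (1 - θ) * ∑ k, d k) / Fintype.card κ with hexcess₂
  have hpos₁ : 0 ≤ excess₁ := div_nonneg (by linarith) hcard.le
  have hpos₂ : 0 ≤ excess₂ := div_nonneg (by linarith) hcard.le
  refine ⟨fun k => (a k - θ * d k - excess₁, b k - (1 - θ) * d k - excess₂), fun k => ?_, ?_⟩
  · have hdk : 0 ≤ d k := sub_nonneg.2 (hc k)
    have hdk₁ : 0 ≤ θ * d k := mul_nonneg hθ₀ hdk
    have hdk₂ : 0 ≤ (1 - θ) * d k := mul_nonneg (sub_nonneg.2 hθ₁) hdk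
    refine ⟨by linarith, by linarith, ?_⟩
    have hsplit : θ * d k + (1 - θ) * d k = a k + b k - c k := by rw [hd]; ring
    linarith [hsplit]
  · simp only [Prod.ext_iff, Prod.fst_sum, Prod.snd_sum, Finset.sum_sub_distrib, ← Finset.mul_sum,
      Finset.sum_const, Finset.card_univ, nsmul_eq_mul, hexcess₁, hexcess₂,
      mul_div_cancel₀ _ hcard.ne']
    constructor <;> ring

end Averaging

/-! ### Codes for the multiple-access channel -/

section Code

open Matrix

variable {n : ℕ} {Y1 Y2 M N ι : Type*} [Fintype Y1] [Fintype Y2] [Fintype M] [Fintype N]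
  [Fintype ι]

/-- The distribution of the `k`-th letter of a codeword of `u` chosen uniformly at random. -/
noncomputable def letterDist (u : M → Fin n → Y1) (k : Fin n) : Y1 → ℝ :=
  pushforward (uniform M) fun m => u m k

theorem isDist_letterDist [Nonempty M] (u : M → Fin n → Y1) (k : Fin n) :
    IsDist (letterDist u k) :=
  isDist_pushforward (isDist_uniform M) _

/-- The channel output `W^{⊗n}(u(m₁), v(m₂))` for the message pair `(m₁, m₂)`. -/
def codeOutput (W : Y1 → Y2 → Matrix ι ι ℂ) (u : M → Fin n → Y1) (v : N → Fin n → Y2)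
    (m : M × N) : Matrix (Fin n → ι) (Fin n → ι) ℂ :=
  tensorPow fun k => W (u m.1 k) (v m.2 k)

variable [DecidableEq ι]

theorem holevo_pushforward (P : M → ℝ) (f : M → Y1) (W : Y1 → Matrix ι ι ℂ) :
    holevo (pushforward P f) W = holevo P (W ∘ f) := by
  simp only [holevo, Complex.coe_smul, sum_pushforward_smul, sum_pushforward_mul,
    Function.comp_apply]

theorem holevo_letterDist_prod (W : Y1 → Y2 → Matrix ι ι ℂ) (u : M → Fin n → Y1)
    (v : N → Fin n → Y2) (k : Fin n) :
    holevo (fun y : Y1 × Y2 => letterDist u k y.1 * letterDist v k y.2) (fun y => W y.1 y.2) =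
      holevo (uniform (M × N)) fun m => W (u m.1 k) (v m.2 k) := by
  simp only [letterDist, ← pushforward_prod]
  rw [holevo_pushforward, uniform_prod]
  rfl

theorem sum_uniform_mul_re_trace_one_sub_mul [Nonempty M] {W : M → Matrix ι ι ℂ}
    (hW : ∀ m, (W m).trace = 1) (D : M → Matrix ι ι ℂ) :
    ∑ m, uniform M m * ((1 - D m) * W m).trace.re = 1 - successProb W D := by
  simp only [sub_mul, one_mul, trace_sub, hW, Complex.sub_re, Complex.one_re, mul_sub, mul_one,
    Finset.sum_sub_distrib, (isDist_uniform M).2, successProb, trace_mul_comm (D _)]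

variable [Nonempty M] [Nonempty N] {W : Y1 → Y2 → Matrix ι ι ℂ}
  {D : M × N → Matrix (Fin n → ι) (Fin n → ι) ℂ}

theorem successProb_codeOutput_fst_le (hW : ∀ y1 y2, IsState (W y1 y2)) (u : M → Fin n → Y1)
    (v : N → Fin n → Y2) (hD : IsPOVM D) :
    successProb (codeOutput W u v) D * Real.logb 2 (Fintype.card M) - (Real.log 2)⁻¹ ≤
      ∑ k, ∑ y2, letterDist v k y2 * holevo (letterDist u k) fun y1 => W y1 y2 :=
  calc successProb (codeOutput W u v) D * Real.logb 2 (Fintype.card M) - (Real.log 2)⁻¹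
      ≤ ∑ m₂, uniform N m₂ * holevo (uniform M) fun m₁ => codeOutput W u v (m₁, m₂) :=
        successProb_fst_mul_logb_sub_le hD fun m => isState_tensorPow fun k => hW _ _
    _ ≤ ∑ m₂, uniform N m₂ * ∑ k, holevo (uniform M) fun m₁ => W (u m₁ k) (v m₂ k) :=
        Finset.sum_le_sum fun m₂ _ => mul_le_mul_of_nonneg_left
          (holevo_tensorPow_le (isDist_uniform M) fun k m₁ => hW (u m₁ k) (v m₂ k))
          ((isDist_uniform N).1 m₂)
    _ = ∑ k, ∑ y2, letterDist v k y2 * holevo (letterDist u k) fun y1 => W y1 y2 := by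
        simp only [letterDist, sum_pushforward_mul, holevo_pushforward, Function.comp_def,
          Finset.mul_sum]
        exact Finset.sum_comm

theorem successProb_codeOutput_snd_le (hW : ∀ y1 y2, IsState (W y1 y2)) (u : M → Fin n → Y1)
    (v : N → Fin n → Y2) (hD : IsPOVM D) :
    successProb (codeOutput W u v) D * Real.logb 2 (Fintype.card N) - (Real.log 2)⁻¹ ≤
      ∑ k, ∑ y1, letterDist u k y1 * holevo (letterDist v k) fun y2 => W y1 y2 :=
  calc successProb (codeOutput W u v) D * Real.logb 2 (Fintype.card N) - (Real.log 2)⁻¹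
      ≤ ∑ m₁, uniform M m₁ * holevo (uniform N) fun m₂ => codeOutput W u v (m₁, m₂) :=
        successProb_snd_mul_logb_sub_le hD fun m => isState_tensorPow fun k => hW _ _
    _ ≤ ∑ m₁, uniform M m₁ * ∑ k, holevo (uniform N) fun m₂ => W (u m₁ k) (v m₂ k) :=
        Finset.sum_le_sum fun m₁ _ => mul_le_mul_of_nonneg_left
          (holevo_tensorPow_le (isDist_uniform N) fun k m₂ => hW (u m₁ k) (v m₂ k))
          ((isDist_uniform M).1 m₁)
    _ = ∑ k, ∑ y1, letterDist u k y1 * holevo (letterDist v k) fun y2 => W y1 y2 := by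
        simp only [letterDist, sum_pushforward_mul, holevo_pushforward, Function.comp_def,
          Finset.mul_sum]
        exact Finset.sum_comm

theorem successProb_codeOutput_prod_le (hW : ∀ y1 y2, IsState (W y1 y2)) (u : M → Fin n → Y1)
    (v : N → Fin n → Y2) (hD : IsPOVM D) :
    successProb (codeOutput W u v) D * Real.logb 2 (Fintype.card (M × N)) - (Real.log 2)⁻¹ ≤
      ∑ k, holevo (fun y : Y1 × Y2 => letterDist u k y.1 * letterDist v k y.2)
        fun y => W y.1 y.2 := by
  simp only [holevo_letterDist_prod]
  exact (successProb_mul_logb_sub_le_holevo hD fun m => isState_tensorPow fun k => hW _ _).trans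
    (holevo_tensorPow_le (isDist_uniform _) fun k m => hW (u m.1 k) (v m.2 k))

end Code

section Region

variable {n : ℕ} {Y1 Y2 M N ι : Type*} [Fintype Y1] [Fintype Y2] [Fintype M] [Fintype N]
  [Fintype ι] [DecidableEq ι] {W : Y1 → Y2 → Matrix ι ι ℂ}

/-- The rate pairs admitted by the independent input distributions `Q1` and `Q2`. -/
def macPentagon (W : Y1 → Y2 → Matrix ι ι ℂ) (Q1 : Y1 → ℝ) (Q2 : Y2 → ℝ) : Set (ℝ × ℝ) :=
  {p | p.1 ≤ ∑ y2, Q2 y2 * holevo Q1 (fun y1 => W y1 y2) ∧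
    p.2 ≤ ∑ y1, Q1 y1 * holevo Q2 (fun y2 => W y1 y2) ∧
    p.1 + p.2 ≤ holevo (fun q : Y1 × Y2 => Q1 q.1 * Q2 q.2) (fun q => W q.1 q.2)}

/-- The union of the pentagons of all pairs of input distributions; it need not be convex. -/
def macRegion (W : Y1 → Y2 → Matrix ι ι ℂ) : Set (ℝ × ℝ) :=
  ⋃ (Q1 : Y1 → ℝ) (Q2 : Y2 → ℝ) (_ : IsDist Q1) (_ : IsDist Q2), macPentagon W Q1 Q2

theorem mem_convexHull_macRegion_of_le_successProb [Nonempty M] [Nonempty N]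
    (hW : ∀ y1 y2, IsState (W y1 y2)) (hn : 0 < n) (u : M → Fin n → Y1) (v : N → Fin n → Y2)
    {D : M × N → Matrix (Fin n → ι) (Fin n → ι) ℂ} (hD : IsPOVM D) {η r1 r2 : ℝ}
    (hη : η ≤ successProb (codeOutput W u v) D)
    (hr1 : n * r1 ≤ η * Real.logb 2 (Fintype.card M) - (Real.log 2)⁻¹)
    (hr2 : n * r2 ≤ η * Real.logb 2 (Fintype.card N) - (Real.log 2)⁻¹) :
    (r1, r2) ∈ convexHull ℝ (macRegion W) := by
  have : Nonempty (Fin n) := Fin.pos_iff_nonempty.1 hn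
  have hlog : 0 < (Real.log 2)⁻¹ := inv_pos.2 (Real.log_pos one_lt_two)
  have hM : 1 ≤ (Fintype.card M : ℝ) := by exact_mod_cast Fintype.card_pos
  have hN : 1 ≤ (Fintype.card N : ℝ) := by exact_mod_cast Fintype.card_pos
  have hηM := mul_le_mul_of_nonneg_right hη (Real.logb_nonneg one_lt_two hM)
  have hηN := mul_le_mul_of_nonneg_right hη (Real.logb_nonneg one_lt_two hN)
  have hfst := successProb_codeOutput_fst_le hW u v hD
  have hsnd := successProb_codeOutput_snd_le hW u v hD
  have hprod := successProb_codeOutput_prod_le hW u v hD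
  rw [Fintype.card_prod, Nat.cast_mul, Real.logb_mul (by positivity) (by positivity)] at hprod
  obtain ⟨p, hp, hsum⟩ := exists_mem_pentagons_sum_eq (fun k =>
      holevo_prod_le (isDist_letterDist u k) (isDist_letterDist v k) fun y1 y2 => (hW y1 y2).1)
    (s := n * r1) (t := n * r2) (by linarith) (by linarith) (by linarith)
  refine mem_convexHull_of_sum_eq_card_smul (p := p) (fun k => ?_) (by simpa using hsum)
  simp only [macRegion, Set.mem_iUnion]
  exact ⟨letterDist u k, letterDist v k, isDist_letterDist u k, isDist_letterDist v k, hp k⟩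

theorem mem_convexHull_macRegion_of_macCodeExists {J1 J2 : ℕ} (hW : ∀ y1 y2, IsState (W y1 y2))
    (hn : 0 < n) (hJ1 : 1 ≤ J1) (hJ2 : 1 ≤ J2) {ε : ℝ} (hcode : MACCodeExists W n J1 J2 ε)
    {r1 r2 : ℝ} (hr1 : n * r1 ≤ (1 - ε) * Real.logb 2 J1 - (Real.log 2)⁻¹)
    (hr2 : n * r2 ≤ (1 - ε) * Real.logb 2 J2 - (Real.log 2)⁻¹) :
    (r1, r2) ∈ convexHull ℝ (macRegion W) := by
  obtain ⟨u, v, D, hD, herror⟩ := hcode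
  have : Nonempty (Fin J1) := Fin.pos_iff_nonempty.1 hJ1
  have : Nonempty (Fin J2) := Fin.pos_iff_nonempty.1 hJ2
  have hmean := sum_uniform_mul_re_trace_one_sub_mul (W := codeOutput W u v)
    (fun m => (isState_tensorPow fun k => hW _ _).2) D
  simp only [uniform, ← Finset.mul_sum, Fintype.card_prod, Fintype.card_fin, Nat.cast_mul,
    ← one_div] at hmean
  have hsuccess : 1 - ε ≤ successProb (codeOutput W u v) D := by
    linarith [hmean.symm.trans_le herror]
  exact mem_convexHull_macRegion_of_le_successProb hW hn u v hD hsuccess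
    (by simpa only [Fintype.card_fin] using hr1) (by simpa only [Fintype.card_fin] using hr2)

theorem mul_sub_le_mul_sub_of_rate_le {R L ε c : ℝ} (hn : 0 < n) (hε : ε ≤ 1)
    (hrate : R - ε ≤ (1 / n : ℝ) * L) (hc : c ≤ n * ε) :
    n * ((1 - ε) * (R - ε) - ε) ≤ (1 - ε) * L - c := by
  have hn' : (0 : ℝ) < n := by exact_mod_cast hn
  rw [one_div, ← div_eq_inv_mul, le_div_iff₀ hn'] at hrate
  nlinarith [mul_le_mul_of_nonneg_left hrate (sub_nonneg.2 hε)]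

end Region

/-- Converse for the classical-quantum multiple-access channel. -/
theorem mac_converse
    {Y1 Y2 ι : Type*} [Fintype Y1] [Fintype Y2] [Fintype ι] [DecidableEq ι]
    (W : Y1 → Y2 → Matrix ι ι ℂ) (hW : ∀ y1 y2, IsState (W y1 y2))
    (R1 R2 : ℝ) (hR1 : 0 ≤ R1) (hR2 : 0 ≤ R2)
    (hach : ∀ ε : ℝ, 0 < ε → ∀ δ : ℝ, 0 < δ → ∃ N : ℕ, ∀ n : ℕ, N ≤ n →
      ∃ J1 J2 : ℕ, 1 ≤ J1 ∧ 1 ≤ J2 ∧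
        R1 - δ ≤ (1 / n : ℝ) * Real.logb 2 J1 ∧
        R2 - δ ≤ (1 / n : ℝ) * Real.logb 2 J2 ∧
        MACCodeExists W n J1 J2 ε) :
    (R1, R2) ∈ closure (convexHull ℝ
      (⋃ (Q1 : Y1 → ℝ) (Q2 : Y2 → ℝ) (_ : IsDist Q1) (_ : IsDist Q2),
        {p : ℝ × ℝ |
          p.1 ≤ ∑ y2, Q2 y2 * holevo Q1 (fun y1 => W y1 y2) ∧
          p.2 ≤ ∑ y1, Q1 y1 * holevo Q2 (fun y2 => W y1 y2) ∧
          p.1 + p.2 ≤ holevo (fun q : Y1 × Y2 => Q1 q.1 * Q2 q.2) (fun q => W q.1 q.2)})) := by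
  change (R1, R2) ∈ closure (convexHull ℝ (macRegion W))
  have hlimit : Filter.Tendsto
      (fun ε : ℝ => ((1 - ε) * (R1 - ε) - ε, (1 - ε) * (R2 - ε) - ε))
      (nhdsWithin 0 (Set.Ioi 0)) (nhds (R1, R2)) :=
    (Continuous.tendsto' (by fun_prop) 0 _ (by simp)).mono_left nhdsWithin_le_nhds
  refine mem_closure_of_tendsto hlimit ?_
  filter_upwards [Ioo_mem_nhdsGT one_pos] with ε ⟨hε0, hε1⟩
  obtain ⟨N, hN⟩ := hach ε hε0 ε hε0
  obtain ⟨K, hK⟩ := exists_nat_ge ((Real.log 2)⁻¹ / ε)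
  set n := max N (max K 1)
  obtain ⟨J1, J2, hJ1, hJ2, hrate1, hrate2, hcode⟩ := hN n (le_max_left _ _)
  have hn : 0 < n := by lia
  have hoverhead : (Real.log 2)⁻¹ ≤ n * ε := by
    have hKn : (K : ℝ) ≤ n := by exact_mod_cast (show K ≤ n by lia)
    exact (div_le_iff₀ hε0).1 (hK.trans hKn)
  exact mem_convexHull_macRegion_of_macCodeExists hW hn hJ1 hJ2 hcode
    (mul_sub_le_mul_sub_of_rate_le hn hε1.le hrate1 hoverhead)
    (mul_sub_le_mul_sub_of_rate_le hn hε1.le hrate2 hoverhead)
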